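/- There exist a finite alphabet α, a state B ∈ α, and a cellular automaton Φ : α^ℤ → α^ℤ with quiescent state B such that Φ is asymptotically nilpotent in density but not uniquely ergodic. -/

import Mathlib

open MeasureTheory Filter

/-- The Besicovitch pseudometric on `α^ℤ`:
`d_B(x,y) = limsup_{n→∞} |{i ∈ [-n,n] : x_i ≠ y_i}| / (2n+1)`. -/
noncomputable def besicovitchDist {α : Type} [DecidableEq α] (x y : ℤ → α) : ℝ :=
  Filter.limsup (fun n : ℕ =>
      (((Finset.Icc (-(n : ℤ)) (n : ℤ)).filter fun i => x i ≠ y i).card : ℝ) /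
        (2 * (n : ℝ) + 1))
    Filter.atTop



namespace ANDCA

/-- Public label of a particle: kind (`true` is a wall `X`, `false` a sweeper `Y`), clock,
previous direction. -/
structure Tag where
  kind : Bool
  clk : Fin 28
  pd : SignType

/-- Where a particle reads its input. -/
inductive Src where
  | own (j : Fin 3)
  | left
  | right

/-- Data packets. -/
structure D where
  src : Src
  tag : Option Tag
  dir : SignType
  act : Option (Option Tag)

def d0 : D := ⟨Src.own 0, none, 0, none⟩

abbrev Sym := Option Tag × D

structure Role where
  kind : Bool
  clk : Fin 28
  pd : SignType
  V0 : D
  V1 : D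
  V2 : D
  w : D
  l2 : D
  e2 : D
  l1 : Option Tag
  e1 : Option Tag

abbrev State := Role × Role

noncomputable instance : DecidableEq Tag := Classical.decEq _

def Tag.toProd (r : Tag) : Bool × Fin 28 × SignType := (r.kind, r.clk, r.pd)

theorem Tag.toProd_injective : Function.Injective Tag.toProd := by
  rintro ⟨⟩ ⟨⟩ h
  simp only [Tag.toProd, Prod.mk.injEq] at h
  simp only [Tag.mk.injEq]
  tauto

instance : Finite Tag := Finite.of_injective _ Tag.toProd_injective

def Src.toSum : Src → Fin 3 ⊕ Bool
  | Src.own j => Sum.inl j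
  | Src.left => Sum.inr true
  | Src.right => Sum.inr false

theorem Src.toSum_injective : Function.Injective Src.toSum := by
  rintro (_ | _ | _) (_ | _ | _) h <;> simp_all [Src.toSum]

instance : Finite Src := Finite.of_injective _ Src.toSum_injective

def D.toProd (r : D) : Src × Option Tag × SignType × Option (Option Tag) :=
  (r.src, r.tag, r.dir, r.act)

theorem D.toProd_injective : Function.Injective D.toProd := by
  rintro ⟨⟩ ⟨⟩ h
  simp only [D.toProd, Prod.mk.injEq] at h
  simp only [D.mk.injEq]
  tauto

instance : Finite D := Finite.of_injective _ D.toProd_injective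

def Role.toProd (r : Role) :
    (Bool × Fin 28 × SignType) × (D × D × D) × (D × D × D) × (Option Tag × Option Tag) :=
  ((r.kind, r.clk, r.pd), (r.V0, r.V1, r.V2), (r.w, r.l2, r.e2), (r.l1, r.e1))

theorem Role.toProd_injective : Function.Injective Role.toProd := by
  rintro ⟨⟩ ⟨⟩ h
  simp only [Role.toProd, Prod.mk.injEq] at h
  simp only [Role.mk.injEq]
  tauto

instance : Finite Role := Finite.of_injective _ Role.toProd_injective

def Role.fresh (K : Bool) (pd : SignType) : Role :=
  ⟨K, 0, pd, d0, d0, d0, d0, d0, d0, none, none⟩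

def Role.tg (r : Role) : Tag := ⟨r.kind, r.clk, r.pd⟩

/-- Direction of motion. -/
def Role.dir (r : Role) : SignType :=
  if 24 ≤ r.clk then r.V0.dir
  else if r.kind then 0
  else if r.clk = 8 ∨ r.clk = 9 then 1
  else if r.clk = 20 ∨ r.clk = 21 then -1
  else 0

/-- Source of the input. -/
def Role.src (r : Role) : Src :=
  if r.kind then
    if r.clk = 0 then Src.own 0
    else if r.clk = 1 then Src.own 1
    else if r.clk = 2 then Src.own 2
    else if r.clk = 7 then Src.right
    else if r.clk = 10 ∨ r.clk = 11 then Src.left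
    else if r.clk = 22 ∨ r.clk = 23 then Src.right
    else Src.own 0
  else
    if r.clk = 3 ∨ r.clk = 4 ∨ r.clk = 5 then Src.left
    else if r.clk = 6 then
      match r.V0.src with
      | Src.own j => Src.own j
      | _ => Src.own 0
    else if r.clk = 10 ∨ r.clk = 11 then Src.right
    else Src.own 0

/-- Data shown to the neighbours. -/
def Role.dat (r : Role) : D :=
  if r.kind then
    if r.clk = 3 then r.V0
    else if r.clk = 4 then r.V1
    else if r.clk = 5 then r.V2
    else if r.clk = 10 then r.V0
    else if r.clk = 11 then r.V1
    else d0
  else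
    if r.clk = 7 then r.w
    else if r.clk = 10 then r.V0
    else if r.clk = 11 then r.V1
    else if r.clk = 22 then { d0 with tag := r.l1 }
    else if r.clk = 23 then r.l2
    else d0

def Role.out (r : Role) : Sym := (some r.tg, r.dat)

def Role.iota (r : Role) : Sym :=
  match r.V0.src with
  | Src.own _ => (none, r.w)
  | Src.left => if r.l1 = none then (none, d0) else (r.l1, r.l2)
  | Src.right => if r.e1 = none then (none, d0) else (r.e1, r.e2)

/-- Action on the mail. -/
def Role.mact (r : Role) : Option Sym :=
  if r.clk = 27 then
    if r.kind then some r.iota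
    else r.V0.act.map fun a => (a, r.V2)
  else none

def Role.chunk (r : Role) (j : Fin 3) : D :=
  if j = 0 then ⟨r.src, some r.tg, r.dir, r.mact.map Prod.fst⟩
  else if j = 1 then r.dat
  else (r.mact.map Prod.snd).getD d0

def guard (ι : Sym) (k : Bool) (c : Fin 28) : Prop := ∃ pd, ι.1 = some ⟨k, c, pd⟩

noncomputable instance (ι : Sym) (k : Bool) (c : Fin 28) : Decidable (guard ι k c) := by
  exact Classical.propDecidable _

def Role.dies (r : Role) (ι : Sym) : Prop :=
  (r.kind = false ∧ (r.clk = 3 ∨ r.clk = 4 ∨ r.clk = 5) ∧ ι.1 ≠ some ⟨true, r.clk, r.pd⟩) ∨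
  (r.kind = true ∧ r.clk = 7 ∧ ι.1 ≠ some ⟨false, 7, r.pd⟩)

noncomputable instance (r : Role) (ι : Sym) : Decidable (r.dies ι) := by
  exact Classical.propDecidable _

noncomputable def Role.upd (r : Role) (ι : Sym) : Role where
  kind := r.kind
  clk := r.clk + 1
  pd := r.pd
  V0 := if (r.kind = true ∧ r.clk = 0) ∨ (r.kind = false ∧ r.clk = 3) then ι.2 else r.V0
  V1 := if (r.kind = true ∧ r.clk = 1) ∨ (r.kind = false ∧ r.clk = 4) then ι.2 else r.V1
  V2 := if (r.kind = true ∧ r.clk = 2) ∨ (r.kind = false ∧ r.clk = 5) then ι.2 else r.V2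
  w := if (r.kind = true ∧ r.clk = 7) ∨ (r.kind = false ∧ r.clk = 6) then ι.2 else r.w
  l1 := if r.clk = 10 then (if guard ι (!r.kind) 10 then ι.2.tag else none)
    else if r.clk = 11 then (if guard ι (!r.kind) 11 then r.l1 else none) else r.l1
  l2 := if r.clk = 11 then ι.2 else r.l2
  e1 := if r.clk = 22 then (if guard ι false 22 then ι.2.tag else none)
    else if r.clk = 23 then (if guard ι false 23 then r.e1 else none) else r.e1
  e2 := if r.clk = 23 then ι.2 else r.e2

noncomputable def Role.step (r : Role) (ι : Sym) : Option Role :=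
  if r.dies ι then none
  else if r.clk = 27 then some (Role.fresh r.kind r.V0.dir)
  else some (r.upd ι)

/-! ### The cellular automaton -/

abbrev Conf := ℤ → Option State

def outO : Option State → Sym
  | none => (none, d0)
  | some q => q.1.out

def readS (x : Conf) (i : ℤ) (q : State) : Sym :=
  match q.1.src with
  | Src.own j => (none, q.2.chunk j)
  | Src.left => outO (x (i - 1))
  | Src.right => outO (x (i + 1))

noncomputable def stepS (q : State) (ι : Sym) : Option State :=
  match q.1.step ι with
  | none => none
  | some r1 =>
    match q.1.mact with
    | none => some (r1, q.2)
    | some s =>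
      match q.2.step s with
      | none => none
      | some m1 => some (r1, m1)

/-- What arrives from cell `i` when moving in direction `d`. -/
noncomputable def send (x : Conf) (i : ℤ) (d : SignType) : Option State :=
  match x i with
  | none => none
  | some q => if q.1.dir = d then stepS q (readS x i q) else none

def merge : Option State → Option State → Option State → Option State
  | some a, none, none => some a
  | none, some a, none => some a
  | none, none, some a => some a
  | _, _, _ => none

noncomputable def Phi (x : Conf) : Conf := fun i =>
  merge (send x i 0) (send x (i - 1) 1) (send x (i + 1) (-1))

end ANDCA

namespace ANDCA

/-! ### Rows: the evolution of a role inside a box -/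

noncomputable def row (K : Bool) (pd : SignType) (I : ℕ → Sym) : ℕ → Role
  | 0 => Role.fresh K pd
  | j + 1 => (row K pd I j).upd (I j)

/-- Column (relative to the box) of a particle after `j` steps. -/
noncomputable def off (K : Bool) (pd : SignType) (I : ℕ → Sym) : ℕ → ℤ
  | 0 => if K then 0 else 1
  | j + 1 => off K pd I j + ((row K pd I j).dir : ℤ)

theorem row_congr (K pd) {I I' : ℕ → Sym} {j : ℕ} (h : ∀ i < j, I i = I' i) :
    row K pd I j = row K pd I' j := by
  induction j with
  | zero => rfl
  | succ j ih => simp only [row]; rw [ih (fun i hi => h i (by omega)), h j (by omega)]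

theorem off_congr (K pd) {I I' : ℕ → Sym} {j : ℕ} (h : ∀ i < j, I i = I' i) :
    off K pd I j = off K pd I' j := by
  induction j with
  | zero => rfl
  | succ j ih =>
    simp only [off]
    rw [ih (fun i hi => h i (by omega)), row_congr K pd (fun i hi => h i (by omega))]

@[simp] theorem row_kind (K pd I j) : (row K pd I j).kind = K := by
  induction j with
  | zero => rfl
  | succ j ih => simpa [row, Role.upd] using ih

@[simp] theorem row_pd (K pd I j) : (row K pd I j).pd = pd := by
  induction j with
  | zero => rfl
  | succ j ih => simpa [row, Role.upd] using ih

/-- The clock value after `j` steps. -/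
def ck (j : ℕ) : Fin 28 := Fin.ofNat 28 j

theorem ck_eq {j : ℕ} (hj : j < 28) (c : Fin 28) : ck j = c ↔ j = c.val := by
  rw [Fin.ext_iff]; simp [ck, Fin.ofNat, Nat.mod_eq_of_lt hj]

theorem ck_succ (j : ℕ) : ck j + 1 = ck (j + 1) := by
  rw [Fin.ext_iff]; simp [ck, Fin.ofNat, Fin.val_add]

@[simp] theorem row_clk (K pd I) (j : ℕ) : (row K pd I j).clk = ck j := by
  induction j with
  | zero => rfl
  | succ j ih => simp [row, Role.upd, ih, ck_succ]

theorem row_succ (K pd I j) : row K pd I (j+1) = (row K pd I j).upd (I j) := rfl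

section regs
variable (K : Bool) (pd : SignType) (I : ℕ → Sym)

/-- A register that only changes at one clock value. -/
theorem reg_stable {β : Type} (f : Role → β) (a : ℕ)
    (hf : ∀ j, a + 1 ≤ j → j < 27 → f (row K pd I (j+1)) = f (row K pd I j))
    {j : ℕ} (h1 : a + 1 ≤ j) (h2 : j ≤ 27) : f (row K pd I j) = f ((row K pd I a).upd (I a)) := by
  induction j, h1 using Nat.le_induction with
  | base => rfl
  | succ j hj ih => rw [hf j hj (by omega), ih (by omega)]

theorem X_V0 {j} (h1 : 1 ≤ j) (h2 : j ≤ 27) : (row true pd I j).V0 = (I 0).2 := by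
  rw [reg_stable true pd I Role.V0 0 ?_ h1 h2]
  · simp [Role.upd, ck_eq]
  · intro j h h'
    simp [row_succ, Role.upd, ck_eq (show j < 28 by omega)]; try omega

theorem X_V1 {j} (h1 : 2 ≤ j) (h2 : j ≤ 27) : (row true pd I j).V1 = (I 1).2 := by
  rw [reg_stable true pd I Role.V1 1 ?_ h1 h2]
  · simp [Role.upd, ck_eq]
  · intro j h h'
    simp [row_succ, Role.upd, ck_eq (show j < 28 by omega)]; try omega

theorem X_V2 {j} (h1 : 3 ≤ j) (h2 : j ≤ 27) : (row true pd I j).V2 = (I 2).2 := by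
  rw [reg_stable true pd I Role.V2 2 ?_ h1 h2]
  · simp [Role.upd, ck_eq]
  · intro j h h'
    simp [row_succ, Role.upd, ck_eq (show j < 28 by omega)]; try omega

theorem X_w {j} (h1 : 8 ≤ j) (h2 : j ≤ 27) : (row true pd I j).w = (I 7).2 := by
  rw [reg_stable true pd I Role.w 7 ?_ h1 h2]
  · simp [Role.upd, ck_eq]
  · intro j h h'
    simp [row_succ, Role.upd, ck_eq (show j < 28 by omega)]; try omega

theorem Y_V0 {j} (h1 : 4 ≤ j) (h2 : j ≤ 27) : (row false pd I j).V0 = (I 3).2 := by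
  rw [reg_stable false pd I Role.V0 3 ?_ h1 h2]
  · simp [Role.upd, ck_eq]
  · intro j h h'
    simp [row_succ, Role.upd, ck_eq (show j < 28 by omega)]; try omega

theorem Y_V1 {j} (h1 : 5 ≤ j) (h2 : j ≤ 27) : (row false pd I j).V1 = (I 4).2 := by
  rw [reg_stable false pd I Role.V1 4 ?_ h1 h2]
  · simp [Role.upd, ck_eq]
  · intro j h h'
    simp [row_succ, Role.upd, ck_eq (show j < 28 by omega)]; try omega

theorem Y_V2 {j} (h1 : 6 ≤ j) (h2 : j ≤ 27) : (row false pd I j).V2 = (I 5).2 := by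
  rw [reg_stable false pd I Role.V2 5 ?_ h1 h2]
  · simp [Role.upd, ck_eq]
  · intro j h h'
    simp [row_succ, Role.upd, ck_eq (show j < 28 by omega)]; try omega

theorem Y_w {j} (h1 : 7 ≤ j) (h2 : j ≤ 27) : (row false pd I j).w = (I 6).2 := by
  rw [reg_stable false pd I Role.w 6 ?_ h1 h2]
  · simp [Role.upd, ck_eq]
  · intro j h h'
    simp [row_succ, Role.upd, ck_eq (show j < 28 by omega)]; try omega

theorem R_l2 {j} (h1 : 12 ≤ j) (h2 : j ≤ 27) : (row K pd I j).l2 = (I 11).2 := by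
  rw [reg_stable K pd I Role.l2 11 ?_ h1 h2]
  · simp [Role.upd, ck_eq]
  · intro j h h'
    simp [row_succ, Role.upd, ck_eq (show j < 28 by omega)]; try omega

theorem R_l1 {j} (h1 : 12 ≤ j) (h2 : j ≤ 27) : (row K pd I j).l1 =
    if guard (I 11) (!K) 11 then (if guard (I 10) (!K) 10 then (I 10).2.tag else none) else none := by
  rw [reg_stable K pd I Role.l1 11 ?_ h1 h2]
  · have h : (row K pd I 11).l1 = _ := congrArg Role.l1 (row_succ K pd I 10)
    simp [Role.upd, ck_eq, h]
  · intro j h h'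
    simp [row_succ, Role.upd, ck_eq (show j < 28 by omega), show j ≠ 10 by omega, show j ≠ 11 by omega]

theorem R_e2 {j} (h1 : 24 ≤ j) (h2 : j ≤ 27) : (row K pd I j).e2 = (I 23).2 := by
  rw [reg_stable K pd I Role.e2 23 ?_ h1 h2]
  · simp [Role.upd, ck_eq]
  · intro j h h'
    simp [row_succ, Role.upd, ck_eq (show j < 28 by omega)]; try omega

theorem R_e1 {j} (h1 : 24 ≤ j) (h2 : j ≤ 27) : (row K pd I j).e1 =
    if guard (I 23) false 23 then (if guard (I 22) false 22 then (I 22).2.tag else none) else none := by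
  rw [reg_stable K pd I Role.e1 23 ?_ h1 h2]
  · have h : (row K pd I 23).e1 = _ := congrArg Role.e1 (row_succ K pd I 22)
    simp [Role.upd, ck_eq, h]
  · intro j h h'
    simp [row_succ, Role.upd, ck_eq (show j < 28 by omega), show j ≠ 22 by omega, show j ≠ 23 by omega]

def base (K : Bool) (j : ℕ) : ℤ :=
  if K then 0 else if j ≤ 8 then 1 else if j = 9 then 2 else if j ≤ 20 then 3 else if j = 21 then 2 else 1

theorem dir_early (j : ℕ) (h : j < 24) : ((row K pd I j).dir : ℤ) = base K (j+1) - base K j := by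
  have h1 : ¬ ((24 : Fin 28) ≤ ck j) := by
    rw [Fin.le_def]; simp [ck, Fin.ofNat]; omega
  simp only [Role.dir, row_clk, row_kind, h1, if_false]
  interval_cases j <;> cases K <;> decide

theorem dir_late (j : ℕ) (h1 : 24 ≤ j) (h : j < 28) : (row K pd I j).dir = (row K pd I 27).V0.dir := by
  have h2 : ((24 : Fin 28) ≤ ck j) := by
    rw [Fin.le_def]; simp [ck, Fin.ofNat]; omega
  simp only [Role.dir, row_clk, h2, if_true]
  cases K
  · rw [Y_V0 _ _ (by omega) (by omega), Y_V0 _ _ (by omega) (by omega)]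
  · rw [X_V0 _ _ (by omega) (by omega), X_V0 _ _ (by omega) (by omega)]

theorem off_base (j : ℕ) (h : j ≤ 24) : off K pd I j = base K j := by
  induction j with
  | zero => simp [off, base]
  | succ j ih => rw [off, ih (by omega), dir_early _ _ _ _ (by omega)]; ring

theorem off_late (j : ℕ) (h : 24 ≤ j) (h' : j ≤ 28) :
    off K pd I j = base K 24 + ((row K pd I 27).V0.dir : ℤ) * (j - 24) := by
  induction j, h using Nat.le_induction with
  | base => rw [off_base _ _ _ _ le_rfl]; simp
  | succ j hj ih =>
    rw [off, ih (by omega), dir_late _ _ _ _ hj (by omega)]; push_cast; ring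

theorem off_end : off K pd I 28 = (if K then 0 else 1) + 4 * ((row K pd I 27).V0.dir : ℤ) := by
  rw [off_late _ _ _ _ (by omega) le_rfl]; cases K <;> simp [base] <;> ring

end regs

theorem mact_row (K pd I) {j : ℕ} (hj : j < 27) : (row K pd I j).mact = none := by
  simp [Role.mact, ck_eq (show j < 28 by omega)]; omega

theorem step_row (K pd I) {j : ℕ} (hj : j < 27) {ι} :
    (row K pd I j).step ι = if (row K pd I j).dies ι then none else some ((row K pd I j).upd ι) := by
  simp [Role.step, ck_eq (show j < 28 by omega), show j ≠ 27 by omega]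

end ANDCA

namespace ANDCA

/-! ### Abstract histories -/

abbrev HT := ℤ → ℤ → State → Prop

def Rd (H : HT) (n p t : ℤ) (q : State) (ι : Sym) : Prop :=
  match q.1.src with
  | Src.own j => ι = (none, q.2.chunk j)
  | Src.left => ι.1 = none ∨ ∃ q', H (p - n) t q' ∧ q'.1.out = ι
  | Src.right => ι.1 = none ∨ ∃ q', H (p + n) t q' ∧ q'.1.out = ι

theorem Rd.own {H : HT} {n p t q ι j} (h : Rd H n p t q ι) (hs : q.1.src = Src.own j) :
    ι = (none, q.2.chunk j) := by
  unfold Rd at h; rw [hs] at h; exact h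

theorem Rd.left {H : HT} {n p t q ι} (h : Rd H n p t q ι) (hs : q.1.src = Src.left)
    {τ} (hτ : ι.1 = some τ) : ∃ q', H (p - n) t q' ∧ q'.1.tg = τ ∧ q'.1.dat = ι.2 := by
  unfold Rd at h; rw [hs] at h
  rcases h with h | ⟨q', h1, h2⟩
  · rw [h] at hτ; cases hτ
  · refine ⟨q', h1, ?_, ?_⟩ <;> subst h2 <;> simp_all [Role.out]

theorem Rd.right {H : HT} {n p t q ι} (h : Rd H n p t q ι) (hs : q.1.src = Src.right)
    {τ} (hτ : ι.1 = some τ) : ∃ q', H (p + n) t q' ∧ q'.1.tg = τ ∧ q'.1.dat = ι.2 := by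
  unfold Rd at h; rw [hs] at h
  rcases h with h | ⟨q', h1, h2⟩
  · rw [h] at hτ; cases hτ
  · refine ⟨q', h1, ?_, ?_⟩ <;> subst h2 <;> simp_all [Role.out]

def mailOk (q q1 : State) : Prop :=
  match q.1.mact with
  | none => q1.2 = q.2
  | some s => q.2.step s = some q1.2

structure Tr (H : HT) (n p t : ℤ) (q : State) (ι : Sym) (q1 : State) : Prop where
  rd : Rd H n p t q ι
  st : q.1.step ι = some q1.1
  mail : mailOk q q1

structure Hist (n m T0 : ℤ) (H C : HT) : Prop where
  npos : 0 < n
  mpos : 0 < m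
  sub : ∀ p t q, C p t q → H p t q
  uniq : ∀ p t q q', H p t q → H p t q' → q = q'
  pred : ∀ p t q, H p t q → T0 ≤ t → ∃ q0 ι p0, p = p0 + (q0.1.dir : ℤ) * n ∧
    C p0 (t - m) q0 ∧ Tr H n p0 (t - m) q0 ι q
  excl : ∀ p1 p2 t1 t2 q1 q2, C p1 t1 q1 → C p2 t2 q2 → |p1 - p2| < n → 2 * |t1 - t2| ≤ m →
    p1 = p2 ∧ t1 = t2

/-- A worldline of a particle inside a box. -/
structure WL (n m : ℤ) (H C : HT) (K : Bool) (pd : SignType) (I : ℕ → Sym) (p0 t0 : ℤ) (μ : Role)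
    (j : ℕ) : Prop where
  el : ∀ i < j, C (p0 + off K pd I i * n) (t0 + i * m) (row K pd I i, μ)
  rd : ∀ i < j, Rd H n (p0 + off K pd I i * n) (t0 + i * m) (row K pd I i, μ) (I i)
  nd : ∀ i < j, ¬ (row K pd I i).dies (I i)
  fin : H (p0 + off K pd I j * n) (t0 + j * m) (row K pd I j, μ)
  hj : j ≤ 27

section hist
variable {n m T0 : ℤ} {H C : HT}

theorem WL.elH (hh : Hist n m T0 H C) {K pd I p0 t0 μ j} (w : WL n m H C K pd I p0 t0 μ j) (i : ℕ) (hi : i ≤ j) :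
    H (p0 + off K pd I i * n) (t0 + i * m) (row K pd I i, μ) := by
  rcases hi.eq_or_lt with rfl | h
  · exact w.fin
  · exact hh.sub _ _ _ (w.el i h)

theorem WL.mono (hh : Hist n m T0 H C) {K pd I p0 t0 μ j} (w : WL n m H C K pd I p0 t0 μ j) (i : ℕ) (hi : i ≤ j) :
    WL n m H C K pd I p0 t0 μ i :=
  ⟨fun k hk => w.el k (by omega), fun k hk => w.rd k (by omega), fun k hk => w.nd k (by omega),
    w.elH hh i hi, by have := w.hj; omega⟩

theorem WL.start (hh : Hist n m T0 H C) {K pd I p0 t0 μ j} (w : WL n m H C K pd I p0 t0 μ j) :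
    H (p0 + (if K then 0 else 1) * n) t0 (Role.fresh K pd, μ) := by
  have := w.elH hh 0 (by omega)
  simpa [off, row] using this

/-- Element of a worldline at an early row. -/
theorem WL.elB (hh : Hist n m T0 H C) {K pd I p0 t0 μ j} (w : WL n m H C K pd I p0 t0 μ j) (i : ℕ) (hi : i ≤ j) (h24 : i ≤ 24) :
    H (p0 + base K i * n) (t0 + i * m) (row K pd I i, μ) := by
  have := w.elH hh i hi
  rwa [off_base _ _ _ _ h24] at this

theorem clk_of_step {r r1 : Role} {ι} (h : r.step ι = some r1) :
    ¬ r.dies ι ∧ ((r.clk = 27 ∧ r1 = Role.fresh r.kind r.V0.dir) ∨ (r.clk ≠ 27 ∧ r1 = r.upd ι)) := by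
  unfold Role.step at h
  split_ifs at h with h1 h2 <;> simp_all

theorem fin_succ_ne {c : Fin 28} (h : c ≠ 27) : (c + 1).val = c.val + 1 := by
  revert c; decide

theorem box_trace (hh : Hist n m T0 H C) (s : ℕ) : ∀ p t q, H p t q → q.1.clk.val = s → T0 + s * m ≤ t →
    ∃ pd I p0, WL n m H C q.1.kind pd I p0 (t - s * m) q.2 s ∧
      p = p0 + off q.1.kind pd I s * n ∧ q.1 = row q.1.kind pd I s := by
  induction s with
  | zero =>
    intro p t q hq hs ht
    obtain ⟨q0, ι, p0, rfl, hC, htr⟩ := hh.pred p t q hq (by simpa using ht)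
    obtain ⟨-, ⟨h1, h2⟩ | ⟨h1, h2⟩⟩ := clk_of_step htr.st
    · refine ⟨q0.1.V0.dir, fun _ => (none, d0), p0 + (q0.1.dir : ℤ) * n -
        off q.1.kind q0.1.V0.dir (fun _ => (none, d0)) 0 * n, ?_, by ring, ?_⟩
      · refine ⟨by simp, by simp, by simp, ?_, by simp⟩
        have : q = (row q.1.kind q0.1.V0.dir (fun _ => (none, d0)) 0, q.2) := by
          ext1
          · simp [row, h2, Role.fresh]
          · rfl
        rw [← this]; simpa using hq
      · simp [row, h2, Role.fresh]
    · exfalso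
      rw [h2] at hs
      have := fin_succ_ne h1
      simp only [Role.upd] at hs
      omega
  | succ s ih =>
    intro p t q hq hs ht
    have hm := hh.mpos
    obtain ⟨q0, ι, p0, rfl, hC, htr⟩ := hh.pred p t q hq (by push_cast at ht; nlinarith)
    obtain ⟨hd, ⟨h1, h2⟩ | ⟨h1, h2⟩⟩ := clk_of_step htr.st
    · rw [h2] at hs; simp [Role.fresh] at hs
    · have hc : q0.1.clk.val = s := by
        rw [h2] at hs
        have := fin_succ_ne h1
        simp only [Role.upd] at hs
        omega
      have hs27 : s < 27 := by
        have := q.1.clk.isLt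
        omega
      obtain ⟨pd, I, p1, w, rfl, hrow⟩ := ih p0 (t - m) q0 (hh.sub _ _ _ hC) hc
        (by push_cast at ht; linarith)
      have hk : q.1.kind = q0.1.kind := by rw [h2]; rfl
      have hmail : q.2 = q0.2 := by
        have := htr.mail
        unfold mailOk at this
        rw [hrow, mact_row _ _ _ hs27] at this
        exact this
      set K := q0.1.kind with hK
      set I' : ℕ → Sym := Function.update I s ι with hI'
      have hlt : ∀ i < s, I i = I' i := fun i hi => by
        rw [hI', Function.update_of_ne (by omega)]
      have hI's : I' s = ι := by simp [hI']
      have hr : ∀ i ≤ s, row K pd I i = row K pd I' i := fun i hi =>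
        row_congr K pd fun k hk => hlt k (by omega)
      have ho : ∀ i ≤ s, off K pd I i = off K pd I' i := fun i hi =>
        off_congr K pd fun k hk => hlt k (by omega)
      have ht0 : t - m - s * m = t - ((s + 1 : ℕ) : ℤ) * m := by push_cast; ring
      have hq1 : q.1 = row K pd I' (s+1) := by
        rw [row_succ, ← hr s le_rfl, ← hrow, hI's, h2]
      have hoff : p1 + off K pd I s * n + (q0.1.dir : ℤ) * n = p1 + off K pd I' (s+1) * n := by
        simp only [off]
        rw [← hr s le_rfl, ← hrow, ho s le_rfl]; ring
      refine ⟨pd, I', p1, ?_, ?_, ?_⟩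
      · rw [hk, hmail, ← ht0]
        refine ⟨?_, ?_, ?_, ?_, by omega⟩
        · intro i hi
          rw [← hr i (by omega), ← ho i (by omega)]
          rcases (Nat.lt_succ_iff.1 hi).eq_or_lt with rfl | h
          · have e : (row K pd I i, q0.2) = q0 := by rw [← hrow]
            rw [e]
            have e2 : t - m - i * m + i * m = t - m := by ring
            rw [e2]; exact hC
          · exact w.el i h
        · intro i hi
          rw [← hr i (by omega), ← ho i (by omega)]
          rcases (Nat.lt_succ_iff.1 hi).eq_or_lt with rfl | h
          · have e : (row K pd I i, q0.2) = q0 := by rw [← hrow]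
            rw [e]
            have e2 : t - m - i * m + i * m = t - m := by ring
            rw [e2, hI's]; exact htr.rd
          · rw [← hlt i h]; exact w.rd i h
        · intro i hi
          rw [← hr i (by omega)]
          rcases (Nat.lt_succ_iff.1 hi).eq_or_lt with rfl | h
          · rw [hI's, ← hrow]; exact hd
          · rw [← hlt i h]; exact w.nd i h
        · rw [← hoff, ← hq1, ← hmail]
          have e2 : t - m - s * m + ((s + 1 : ℕ) : ℤ) * m = t := by push_cast; ring
          rw [e2]; exact hq
      · rw [hk]; exact hoff
      · rw [hk]; exact hq1

/-- Box trace, in the form used for known tags. -/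
theorem box_trace' (hh : Hist n m T0 H C) {K : Bool} {pd : SignType} {s : ℕ} {c : Fin 28} (hc : c.val = s) {p t0 : ℤ} {q : State}
    (hq : H p (t0 + s * m) q) (ht : q.1.tg = ⟨K, c, pd⟩) (h0 : T0 ≤ t0) (h24 : s ≤ 24) :
    ∃ I, WL n m H C K pd I (p - base K s * n) t0 q.2 s ∧ q.1 = row K pd I s := by
  have hk : q.1.kind = K := congrArg Tag.kind ht
  have hck : q.1.clk = c := congrArg Tag.clk ht
  have hpd : q.1.pd = pd := congrArg Tag.pd ht
  obtain ⟨pd', I, p0, w, hp, hrow⟩ := box_trace hh s p (t0 + s * m) q hq (by rw [hck, hc])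
    (by linarith)
  rw [hk] at w hp hrow
  have : pd' = pd := by rw [← hpd, hrow]; simp
  subst this
  rw [off_base _ _ _ _ h24] at hp
  have e1 : p0 = p - base K s * n := by rw [hp]; ring
  have e2 : t0 + s * m - s * m = t0 := by ring
  rw [e1, e2] at w
  exact ⟨I, w, hrow⟩

end hist
end ANDCA

namespace ANDCA

section srcdat
variable (pd : SignType) (I : ℕ → Sym)

theorem srcX0 : (row true pd I 0).src = Src.own 0 := by simp [Role.src, ck_eq]
theorem srcX1 : (row true pd I 1).src = Src.own 1 := by simp [Role.src, ck_eq]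
theorem srcX2 : (row true pd I 2).src = Src.own 2 := by simp [Role.src, ck_eq]
theorem srcX7 : (row true pd I 7).src = Src.right := by simp [Role.src, ck_eq]
theorem srcX10 : (row true pd I 10).src = Src.left := by simp [Role.src, ck_eq]
theorem srcX11 : (row true pd I 11).src = Src.left := by simp [Role.src, ck_eq]
theorem srcX22 : (row true pd I 22).src = Src.right := by simp [Role.src, ck_eq]
theorem srcX23 : (row true pd I 23).src = Src.right := by simp [Role.src, ck_eq]
theorem srcY3 : (row false pd I 3).src = Src.left := by simp [Role.src, ck_eq]
theorem srcY4 : (row false pd I 4).src = Src.left := by simp [Role.src, ck_eq]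
theorem srcY5 : (row false pd I 5).src = Src.left := by simp [Role.src, ck_eq]
theorem srcY6 {j} (h : (I 3).2.src = Src.own j) : (row false pd I 6).src = Src.own j := by
  simp [Role.src, ck_eq, Y_V0, h]
theorem srcY10 : (row false pd I 10).src = Src.right := by simp [Role.src, ck_eq]
theorem srcY11 : (row false pd I 11).src = Src.right := by simp [Role.src, ck_eq]

theorem datX3 : (row true pd I 3).dat = (I 0).2 := by simp [Role.dat, ck_eq, X_V0]
theorem datX4 : (row true pd I 4).dat = (I 1).2 := by simp [Role.dat, ck_eq, X_V1]
theorem datX5 : (row true pd I 5).dat = (I 2).2 := by simp [Role.dat, ck_eq, X_V2]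
theorem datX10 : (row true pd I 10).dat = (I 0).2 := by simp [Role.dat, ck_eq, X_V0]
theorem datX11 : (row true pd I 11).dat = (I 1).2 := by simp [Role.dat, ck_eq, X_V1]
theorem datY7 : (row false pd I 7).dat = (I 6).2 := by simp [Role.dat, ck_eq, Y_w]
theorem datY10 : (row false pd I 10).dat = (I 3).2 := by simp [Role.dat, ck_eq, Y_V0]
theorem datY11 : (row false pd I 11).dat = (I 4).2 := by simp [Role.dat, ck_eq, Y_V1]
theorem datY22 : (row false pd I 22).dat.tag = (row false pd I 27).l1 := by
  simp [Role.dat, ck_eq, R_l1]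
theorem datY23 : (row false pd I 23).dat = (I 11).2 := by simp [Role.dat, ck_eq, R_l2]

end srcdat

section hist
variable {n m T0 : ℤ} {H C : HT}

theorem WL.chunk0 {pd I p0 t0 μ j} (w : WL n m H C true pd I p0 t0 μ j) (hj : 1 ≤ j) :
    (I 0).2 = μ.chunk 0 := by
  have := (w.rd 0 (by omega)).own (srcX0 pd I)
  rw [this]
theorem WL.chunk1 {pd I p0 t0 μ j} (w : WL n m H C true pd I p0 t0 μ j) (hj : 2 ≤ j) :
    (I 1).2 = μ.chunk 1 := by
  have := (w.rd 1 (by omega)).own (srcX1 pd I)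
  rw [this]
theorem WL.chunk2 {pd I p0 t0 μ j} (w : WL n m H C true pd I p0 t0 μ j) (hj : 3 ≤ j) :
    (I 2).2 = μ.chunk 2 := by
  have := (w.rd 2 (by omega)).own (srcX2 pd I)
  rw [this]

theorem WL.rdB {K pd I p0 t0 μ j} (w : WL n m H C K pd I p0 t0 μ j) (i : ℕ) (hi : i < j) (h24 : i ≤ 24) :
    Rd H n (p0 + base K i * n) (t0 + i * m) (row K pd I i, μ) (I i) := by
  have := w.rd i hi
  rwa [off_base _ _ _ _ h24] at this

/-- A sweeper that survived row 5 has a wall next to it, whose mail it has copied. -/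
theorem M1 (hh : Hist n m T0 H C) {pd I p0 t0 μ j} (w : WL n m H C false pd I p0 t0 μ j)
    (hj : 6 ≤ j) (hT : T0 ≤ t0) :
    ∃ I' ρ, WL n m H C true pd I' p0 t0 ρ 5 ∧ (I 3).2 = ρ.chunk 0 ∧ (I 4).2 = ρ.chunk 1 ∧
      (I 5).2 = ρ.chunk 2 := by
  have n3 := w.nd 3 (by omega)
  have n4 := w.nd 4 (by omega)
  have n5 := w.nd 5 (by omega)
  simp [Role.dies, ck_eq] at n3 n4 n5
  obtain ⟨q3, h3, t3, d3⟩ := (w.rdB 3 (by omega) (by omega)).left (srcY3 pd I) n3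
  obtain ⟨q4, h4, t4, d4⟩ := (w.rdB 4 (by omega) (by omega)).left (srcY4 pd I) n4
  obtain ⟨q5, h5, t5, d5⟩ := (w.rdB 5 (by omega) (by omega)).left (srcY5 pd I) n5
  have e3 : p0 + base false 3 * n - n = p0 := by simp [base]
  have e4 : p0 + base false 4 * n - n = p0 := by simp [base]
  have e5 : p0 + base false 5 * n - n = p0 := by simp [base]
  rw [e3] at h3; rw [e4] at h4; rw [e5] at h5
  obtain ⟨I', w', hr5⟩ := box_trace' hh (s := 5) (by simp [ck]) h5 t5 hT (by omega)
  have eb : p0 - base true 5 * n = p0 := by simp [base]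
  rw [eb] at w'
  have g3 := hh.uniq _ _ _ _ (w'.elB hh 3 (by omega) (by omega)) (by simpa [base] using h3)
  have g4 := hh.uniq _ _ _ _ (w'.elB hh 4 (by omega) (by omega)) (by simpa [base] using h4)
  refine ⟨I', q5.2, w', ?_, ?_, ?_⟩
  · rw [← d3, ← g3, datX3, w'.chunk0 (by omega)]
  · rw [← d4, ← g4, datX4, w'.chunk1 (by omega)]
  · rw [← d5, hr5, datX5, w'.chunk2 (by omega)]

/-- A wall that survived row 7 has a sweeper next to it. -/
theorem M2 (hh : Hist n m T0 H C) {pd I p0 t0 μ j} (w : WL n m H C true pd I p0 t0 μ j)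
    (hj : 8 ≤ j) (hT : T0 ≤ t0) :
    ∃ I' ρ, WL n m H C false pd I' p0 t0 ρ 7 ∧ (I 7).2 = (row false pd I' 7).w := by
  have n7 := w.nd 7 (by omega)
  simp [Role.dies, ck_eq] at n7
  obtain ⟨q7, h7, t7, d7⟩ := (w.rdB 7 (by omega) (by omega)).right (srcX7 pd I) n7
  obtain ⟨I', w', hr7⟩ := box_trace' hh (s := 7) (by simp) h7 t7 hT (by omega)
  have eb : p0 + base true 7 * n + n - base false 7 * n = p0 := by simp [base]
  rw [eb] at w'
  exact ⟨I', q7.2, w', by rw [← d7, hr7, datY7, Y_w _ _ (by omega) (by omega)]⟩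

/-- Level-up of a history. -/
def HU (n : ℤ) (H : HT) : HT := fun p t q =>
  ∃ pd, H p t (Role.fresh true pd, q.1) ∧ H (p + n) t (Role.fresh false pd, q.2)

def CU (n m : ℤ) (H C : HT) : HT := fun p t q => HU n H p t q ∧
  ∀ s : ℕ, s ≤ 24 → ∀ K : Bool, ∃ r, C (p + base K s * n) (t + s * m) r ∧ r.1.kind = K ∧ r.1.clk = ck s

theorem HU_of_Y (hh : Hist n m T0 H C) {pd I p0 t0 μ j} (w : WL n m H C false pd I p0 t0 μ j)
    (hj : 6 ≤ j) (hT : T0 ≤ t0) : ∃ ρ, HU n H p0 t0 (ρ, μ) ∧ (I 3).2 = ρ.chunk 0 ∧ (I 4).2 = ρ.chunk 1 ∧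
      (I 5).2 = ρ.chunk 2 := by
  obtain ⟨I', ρ, w', h⟩ := M1 hh w hj hT
  refine ⟨ρ, ⟨pd, ?_, ?_⟩, h⟩
  · simpa using w'.start hh
  · simpa using w.start hh

theorem HU_of_X (hh : Hist n m T0 H C) {pd I p0 t0 ρ j} (w : WL n m H C true pd I p0 t0 ρ j)
    (hj : 8 ≤ j) (hT : T0 ≤ t0) : ∃ μ, HU n H p0 t0 (ρ, μ) := by
  obtain ⟨I', μ, w', h⟩ := M2 hh w hj hT
  refine ⟨μ, ⟨pd, ?_, ?_⟩⟩
  · simpa using w.start hh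
  · simpa using w'.start hh

/-- Tracing a freshly initialised particle back through the previous box. -/
theorem prev_box (hh : Hist n m T0 H C) {K pd p t ρ} (h : H p t (Role.fresh K pd, ρ))
    (hT : T0 + 28 * m ≤ t) :
    ∃ pd' I ρ', WL n m H C K pd' I (p - (if K then 0 else 1) * n - 4 * (pd : ℤ) * n) (t - 28 * m) ρ' 27 ∧
      (∃ p0, C p0 (t - m) (row K pd' I 27, ρ')) ∧
      (row K pd' I 27).V0.dir = pd ∧ mailOk (row K pd' I 27, ρ') (Role.fresh K pd, ρ) := by
  have hm := hh.mpos
  obtain ⟨q0, ι, p0, hp, hC, htr⟩ := hh.pred _ _ _ h (by linarith)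
  obtain ⟨hd, ⟨h1, h2⟩ | ⟨h1, h2⟩⟩ := clk_of_step htr.st
  swap
  · exfalso
    have := fin_succ_ne h1
    have h3 : (Role.fresh K pd).clk = q0.1.clk + 1 := congrArg Role.clk h2
    rw [← h3] at this
    simp [Role.fresh] at this
  obtain ⟨pd', I, p1, w, hp1, hrow⟩ := box_trace hh 27 p0 (t - m) q0 (hh.sub _ _ _ hC) (by rw [h1]; rfl)
    (by push_cast; linarith)
  have hk : K = q0.1.kind := congrArg Role.kind h2
  have hpd : pd = q0.1.V0.dir := congrArg Role.pd h2
  rw [← hk] at w hp1 hrow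
  have hV : (row K pd' I 27).V0.dir = pd := by rw [← hrow, hpd]
  have hq0 : q0 = (row K pd' I 27, q0.2) := by rw [← hrow]
  refine ⟨pd', I, q0.2, ?_, ⟨p0, ?_⟩, hV, ?_⟩
  · have e1 : t - m - ((27 : ℕ) : ℤ) * m = t - 28 * m := by push_cast; ring
    have e2 : p1 = p - (if K then 0 else 1) * n - 4 * (pd : ℤ) * n := by
      have : off K pd' I 28 = off K pd' I 27 + ((row K pd' I 27).dir : ℤ) := rfl
      rw [off_end, hV] at this
      rw [hrow] at hp
      rw [hp, hp1]
      have h3 : ((row K pd' I 27).dir : ℤ) = (if K then 0 else 1) + 4 * (pd : ℤ) - off K pd' I 27 := by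
        linarith
      rw [h3]; ring
    rw [e1, e2] at w
    exact w
  · rw [← hq0]; exact hC
  · rw [← hq0]; exact htr.mail

/-- The key lemma: predecessors one level up. -/
theorem M3 (hh : Hist n m T0 H C) {p t q} (h : HU n H p t q) (hT : T0 + 28 * m ≤ t) :
    ∃ q0 ι p0, p = p0 + (q0.1.dir : ℤ) * (4 * n) ∧
    CU n m H C p0 (t - 28 * m) q0 ∧ Tr (HU n H) (4 * n) p0 (t - 28 * m) q0 ι q := by
  obtain ⟨r', m'⟩ := q
  obtain ⟨pd, hX, hY⟩ := h
  simp only at hX hY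
  obtain ⟨pdx, Ix, ρ, wX, -, dX, mX⟩ := prev_box hh hX hT
  obtain ⟨pdy, Iy, μ, wY, -, dY, mY⟩ := prev_box hh hY hT
  have e1 : p - (if true then 0 else 1) * n - 4 * (pd : ℤ) * n = p - 4 * (pd : ℤ) * n := by simp
  have e2 : p + n - (if false then 0 else 1) * n - 4 * (pd : ℤ) * n = p - 4 * (pd : ℤ) * n := by simp
  rw [e1] at wX
  rw [e2] at wY
  have hT0 : T0 ≤ t - 28 * m := by linarith
  generalize t - 28 * m = t0 at *
  set p0 := p - 4 * (pd : ℤ) * n with hp0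
  -- the two are consistent
  obtain ⟨I1, ρ1, w1, c0, c1, c2⟩ := M1 hh wY (by omega) hT0
  obtain ⟨hpd1, hρ⟩ := Prod.ext_iff.1 (hh.uniq _ _ _ _ (wX.start hh) (w1.start hh))
  simp only at hpd1 hρ
  have hpd2 : pdx = pdy := congrArg Role.pd hpd1
  subst hpd2
  subst hρ
  obtain ⟨I2, μ2, w2, cw⟩ := M2 hh wX (by omega) hT0
  have hy7 := hh.uniq _ _ _ _ (wY.elB hh 7 (by omega) (by omega)) (w2.elB hh 7 (by omega) (by omega))
  have hy7' : row false pdx Iy 7 = row false pdx I2 7 := congrArg Prod.fst hy7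
  rw [← hy7', Y_w _ _ (by omega) (by omega)] at cw
  have hH0 : HU n H p0 t0 (ρ, μ) := by
    refine ⟨pdx, ?_, ?_⟩
    · simpa using wX.start hh
    · simpa using wY.start hh
  have x0 := wX.chunk0 (by omega)
  have x1 := wX.chunk1 (by omega)
  have hdir : ρ.dir = pd := by
    rw [X_V0 _ _ (by omega) (by omega), x0] at dX
    simpa [Role.chunk] using dX
  refine ⟨(ρ, μ), (row true pdx Ix 27).iota, p0, ?_, ⟨hH0, ?_⟩, ?_, ?_, ?_⟩
  · simp only [hdir, hp0]; ring
  · intro s hs K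
    cases K
    · refine ⟨(row false pdx Iy s, μ), ?_, row_kind false pdx Iy s, row_clk false pdx Iy s⟩
      · have := wY.el s (by omega)
        rw [off_base _ _ _ _ hs] at this
        exact this
    · refine ⟨(row true pdx Ix s, ρ), ?_, row_kind true pdx Ix s, row_clk true pdx Ix s⟩
      · have := wX.el s (by omega)
        rw [off_base _ _ _ _ hs] at this
        exact this
  · -- the reading
    have hV0 : (row true pdx Ix 27).V0.src = ρ.src := by
      rw [X_V0 _ _ (by omega) (by omega), x0]; simp [Role.chunk]
    have hsrcY : (Iy 3).2.src = ρ.src := by rw [c0]; simp [Role.chunk]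
    unfold Rd
    simp only
    unfold Role.iota
    rw [hV0]
    cases hs : ρ.src with
    | own j =>
      simp only
      rw [hs] at hsrcY
      have := (wY.rd 6 (by omega)).own (srcY6 pdx Iy hsrcY)
      rw [X_w _ _ (by omega) (by omega), cw, this]
    | left =>
      simp only
      rw [R_l1 _ _ _ (by omega) (by omega), R_l2 _ _ _ (by omega) (by omega)]
      by_cases g11 : guard (Ix 11) (!true) 11
      swap
      · rw [if_neg g11]; simp
      by_cases g10 : guard (Ix 10) (!true) 10
      swap
      · rw [if_neg g10]; simp
      rw [if_pos g11, if_pos g10]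
      split_ifs with hnone
      · left; rfl
      right
      obtain ⟨pa, ha⟩ := g11
      obtain ⟨pb, hb⟩ := g10
      obtain ⟨qa, ha1, ha2, ha3⟩ := (wX.rdB 11 (by omega) (by omega)).left (srcX11 pdx Ix) ha
      obtain ⟨qb, hb1, hb2, hb3⟩ := (wX.rdB 10 (by omega) (by omega)).left (srcX10 pdx Ix) hb
      obtain ⟨I', w', hr⟩ := box_trace' hh (s := 11) (by rfl) ha1 ha2 hT0 (by omega)
      obtain ⟨ρL, hU, k0, k1, k2⟩ := HU_of_Y hh w' (by omega) hT0
      refine ⟨(ρL, qa.2), ?_, ?_⟩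
      · have e : p0 - 4 * n = p0 + base true 11 * n - n - base (!true) 11 * n := by
          simp [base]; ring
        rw [e]; exact hU
      · have hb' := hh.uniq _ _ _ qb (w'.elB hh 10 (by omega) (by omega)) (by
            have e : p0 + base true 11 * n - n - base (!true) 11 * n + base (!true) 10 * n =
              p0 + base true 10 * n - n := by simp [base]
            rw [e]; exact hb1)
        have f1 : (Ix 10).2 = ρL.chunk 0 := by
          rw [← hb3, ← hb', ← k0]; exact datY10 _ _
        have f2 : (Ix 11).2 = ρL.chunk 1 := by
          rw [← ha3, hr, ← k1]; exact datY11 _ _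
        rw [f1, f2]; simp [Role.out, Role.chunk]
    | right =>
      simp only
      rw [R_e1 _ _ _ (by omega) (by omega), R_e2 _ _ _ (by omega) (by omega)]
      by_cases g23 : guard (Ix 23) false 23
      swap
      · simp [g23]
      by_cases g22 : guard (Ix 22) false 22
      swap
      · simp [g22]
      rw [if_pos g23, if_pos g22]
      split_ifs with hnone
      · left; rfl
      right
      obtain ⟨pa, ha⟩ := g23
      obtain ⟨pb, hb⟩ := g22
      obtain ⟨qa, ha1, ha2, ha3⟩ := (wX.rdB 23 (by omega) (by omega)).right (srcX23 pdx Ix) ha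
      obtain ⟨qb, hb1, hb2, hb3⟩ := (wX.rdB 22 (by omega) (by omega)).right (srcX22 pdx Ix) hb
      have qa' := hh.uniq _ _ _ _ (wY.elB hh 23 (by omega) (by omega)) (by simpa [base] using ha1)
      have qb' := hh.uniq _ _ _ _ (wY.elB hh 22 (by omega) (by omega)) (by simpa [base] using hb1)
      have f1 : (Ix 23).2 = (Iy 11).2 := by rw [← ha3, ← qa']; exact datY23 _ _
      have f2 : (Ix 22).2.tag = (row false pdx Iy 27).l1 := by rw [← hb3, ← qb']; exact datY22 _ _
      rw [f1, f2]
      rw [f2] at hnone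
      rw [R_l1 _ _ _ (by omega) (by omega)] at hnone ⊢
      by_cases g11 : guard (Iy 11) (!false) 11
      swap
      · rw [if_neg g11] at hnone; exact absurd rfl hnone
      by_cases g10 : guard (Iy 10) (!false) 10
      swap
      · rw [if_neg g10] at hnone; simp at hnone
      rw [if_pos g11, if_pos g10]
      obtain ⟨pa', ha'⟩ := g11
      obtain ⟨pb', hb'⟩ := g10
      obtain ⟨ra, ra1, ra2, ra3⟩ := (wY.rdB 11 (by omega) (by omega)).right (srcY11 pdx Iy) ha'
      obtain ⟨rb, rb1, rb2, rb3⟩ := (wY.rdB 10 (by omega) (by omega)).right (srcY10 pdx Iy) hb'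
      obtain ⟨I', w', hr⟩ := box_trace' hh (s := 11) (by rfl) ra1 ra2 hT0 (by omega)
      obtain ⟨μR, hU⟩ := HU_of_X hh w' (by omega) hT0
      refine ⟨(ra.2, μR), ?_, ?_⟩
      · have e : p0 + 4 * n = p0 + base false 11 * n + n - base (!false) 11 * n := by
          simp [base]; ring
        rw [e]; exact hU
      · have hb'' := hh.uniq _ _ _ rb (w'.elB hh 10 (by omega) (by omega)) (by
            have e : p0 + base false 11 * n + n - base (!false) 11 * n + base (!false) 10 * n =
              p0 + base false 10 * n + n := by simp [base]
            rw [e]; exact rb1)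
        have g1 : (Iy 10).2 = ra.2.chunk 0 := by
          rw [← rb3, ← hb'', ← w'.chunk0 (by omega)]; exact datX10 _ _
        have g2 : (Iy 11).2 = ra.2.chunk 1 := by
          rw [← ra3, hr, ← w'.chunk1 (by omega)]; exact datX11 _ _
        rw [g1, g2]; simp [Role.out, Role.chunk]
  · unfold mailOk at mX
    simpa [Role.mact, ck_eq] using mX
  · unfold mailOk at mY ⊢
    have hact : (row false pdx Iy 27).mact = ρ.mact := by
      have hck : ck 27 = 27 := rfl
      simp only [Role.mact, row_clk, row_kind, Y_V0 _ _ (show 4 ≤ 27 by omega) le_rfl,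
        Y_V2 _ _ (show 6 ≤ 27 by omega) le_rfl, c0, c2]
      simp only [Role.chunk]
      cases h : ρ.mact <;> simp [Role.mact] at h ⊢ <;> simp_all
    simp only [hact] at mY
    exact mY

end hist
end ANDCA

namespace ANDCA

section hist
variable {n m T0 : ℤ} {H C : HT}

theorem round_aux {m τ : ℤ} (hm : 0 < m) (h : 2 * |τ| ≤ 28 * m) :
    ∃ k : ℤ, 2 * |τ - k * m| ≤ m ∧ -14 ≤ k ∧ k ≤ 14 ∧ (0 ≤ τ → 0 ≤ k) ∧ (τ ≤ 0 → k ≤ 0) := by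
  have h1 := Int.emod_add_mul_ediv (2 * τ + m) (2 * m)
  have h2 := Int.emod_nonneg (2 * τ + m) (show 2 * m ≠ 0 by omega)
  have h3 := Int.emod_lt_of_pos (2 * τ + m) (show 0 < 2 * m by omega)
  generalize (2 * τ + m) / (2 * m) = k at *
  generalize (2 * τ + m) % (2 * m) = r at *
  obtain ⟨h4, h5⟩ := abs_le.1 (show |τ| ≤ 14 * m by linarith)
  refine ⟨k, ?_, ?_, ?_, ?_, ?_⟩
  · have : |2 * (τ - k * m)| ≤ m := abs_le.2 ⟨by nlinarith, by nlinarith⟩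
    rwa [abs_mul, abs_two] at this
  · by_contra hk
    have : k ≤ -15 := by omega
    nlinarith
  · by_contra hk
    have : 15 ≤ k := by omega
    nlinarith
  · intro h
    by_contra hk
    have : k ≤ -1 := by omega
    nlinarith
  · intro h
    by_contra hk
    have : 1 ≤ k := by omega
    nlinarith

theorem excl_core (hh : Hist n m T0 H C) {p1 p2 t1 t2 q1 q2} (h1 : CU n m H C p1 t1 q1)
    (h2 : CU n m H C p2 t2 q2) (K : Bool) (s1 s2 : ℕ) (hs1 : s1 ≤ 24) (hs2 : s2 ≤ 24)
    (hp : |p1 + base K s1 * n - p2| < n) (ht : 2 * |t1 - t2 - ((s2 : ℤ) - s1) * m| ≤ m) :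
    K = true ∧ p1 + base K s1 * n = p2 ∧ t1 = t2 := by
  obtain ⟨r1, c1, k1, l1⟩ := h1.2 s1 hs1 K
  obtain ⟨r2, c2, k2, l2⟩ := h2.2 s2 hs2 true
  have e : p2 + base true s2 * n = p2 := by simp [base]
  rw [e] at c2
  obtain ⟨ep, et⟩ := hh.excl _ _ _ _ _ _ c1 c2 hp (by
    have : t1 + s1 * m - (t2 + s2 * m) = t1 - t2 - ((s2 : ℤ) - s1) * m := by ring
    rwa [this])
  rw [ep, et] at c1
  have := hh.uniq _ _ _ _ (hh.sub _ _ _ c1) (hh.sub _ _ _ c2)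
  subst this
  refine ⟨by rw [← k1, k2], ep, ?_⟩
  rw [l1, ck_eq (by omega)] at l2
  have : s1 = s2 := by rw [l2]; simp [ck, Fin.ofNat]; omega
  subst this
  linarith

theorem excl_aux (hh : Hist n m T0 H C) {p1 p2 t1 t2 q1 q2} (h1 : CU n m H C p1 t1 q1)
    (h2 : CU n m H C p2 t2 q2) (hle : p1 ≤ p2) (hp : p2 - p1 < 4 * n) (ht : 2 * |t1 - t2| ≤ 28 * m) :
    p1 = p2 ∧ t1 = t2 := by
  have hn := hh.npos
  obtain ⟨k, hk, k1, k2, k3, k4⟩ := round_aux hh.mpos ht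
  have a1 := Int.emod_add_mul_ediv (p2 - p1) n
  have a2 := Int.emod_nonneg (p2 - p1) (show n ≠ 0 by omega)
  have a3 := Int.emod_lt_of_pos (p2 - p1) hn
  generalize (p2 - p1) / n = a at *
  generalize (p2 - p1) % n = r at *
  have ha0 : 0 ≤ a := by
    by_contra h
    have : a ≤ -1 := by omega
    nlinarith
  have ha3 : a ≤ 3 := by
    by_contra h
    have : 4 ≤ a := by omega
    nlinarith
  -- a general way to conclude
  have main : ∀ (K : Bool) (s1 : ℕ), s1 ≤ 24 → 0 ≤ (s1 : ℤ) + k → (s1 : ℤ) + k ≤ 24 → base K s1 = a →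
      K = true ∧ p1 + base K s1 * n = p2 ∧ t1 = t2 := by
    intro K s1 hs1 hs2 hs3 hb
    refine excl_core hh h1 h2 K s1 ((s1 : ℤ) + k).toNat hs1 (by omega) ?_ ?_
    · rw [hb, abs_lt]; constructor <;> nlinarith
    · rw [Int.toNat_of_nonneg hs2]
      have : (s1 : ℤ) + k - s1 = k := by ring
      rw [this]; exact hk
  have hcase : k ≤ 0 ∨ 0 ≤ k := by omega
  interval_cases a
  · rcases hcase with h | h
    · obtain ⟨-, e1, e2⟩ := main true 14 (by omega) (by push_cast; omega) (by push_cast; omega) (by simp [base])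
      exact ⟨by simpa [base] using e1, e2⟩
    · obtain ⟨-, e1, e2⟩ := main true 0 (by omega) (by push_cast; omega) (by push_cast; omega) (by simp [base])
      exact ⟨by simpa [base] using e1, e2⟩
  · exfalso
    rcases hcase with h | h
    · have := (main false 22 (by omega) (by push_cast; omega) (by push_cast; omega) (by simp [base])).1
      cases this
    · have := (main false 8 (by omega) (by push_cast; omega) (by push_cast; omega) (by simp [base])).1
      cases this
  · exfalso
    rcases hcase with h | h
    · have := (main false 21 (by omega) (by push_cast; omega) (by push_cast; omega) (by simp [base])).1
      cases this
    · have := (main false 9 (by omega) (by push_cast; omega) (by push_cast; omega) (by simp [base])).1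
      cases this
  · exfalso
    rcases hcase with h | h
    · have := (main false 20 (by omega) (by push_cast; omega) (by push_cast; omega) (by simp [base])).1
      cases this
    · have := (main false 10 (by omega) (by push_cast; omega) (by push_cast; omega) (by simp [base])).1
      cases this

theorem HU_uniq (hh : Hist n m T0 H C) {p t q q'} (h : HU n H p t q) (h' : HU n H p t q') : q = q' := by
  obtain ⟨pd, a, b⟩ := h
  obtain ⟨pd', a', b'⟩ := h'
  have h1 := hh.uniq _ _ _ _ a a'
  have h2 := hh.uniq _ _ _ _ b b'
  ext1
  · exact (Prod.ext_iff.1 h1).2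
  · exact (Prod.ext_iff.1 h2).2

theorem Hist.up (hh : Hist n m T0 H C) :
    Hist (4 * n) (28 * m) (T0 + 28 * m) (HU n H) (CU n m H C) where
  npos := by have := hh.npos; omega
  mpos := by have := hh.mpos; omega
  sub := fun p t q h => h.1
  uniq := fun p t q q' h h' => HU_uniq hh h h'
  pred := fun p t q h ht => M3 hh h ht
  excl := by
    intro p1 p2 t1 t2 q1 q2 h1 h2 hp ht
    rcases le_total p1 p2 with h | h
    · exact excl_aux hh h1 h2 h (by rw [abs_lt] at hp; linarith) ht
    · have := excl_aux hh h2 h1 h (by rw [abs_lt] at hp; linarith) (by rwa [abs_sub_comm])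
      exact ⟨this.1.symm, this.2.symm⟩

/-- Forward paths. -/
def Path (n m : ℤ) (H : HT) : ℕ → ℤ → ℤ → ℤ → Prop
  | 0, p, _, p' => p' = p
  | k + 1, p, t, p' => ∃ p1 q, Path n m H k p t p1 ∧ H p1 (t + k * m) q ∧ p' = p1 + (q.1.dir : ℤ) * n

theorem Path.uniq (hh : Hist n m T0 H C) {k p t p1 p2} (h1 : Path n m H k p t p1)
    (h2 : Path n m H k p t p2) : p1 = p2 := by
  induction k generalizing p1 p2 with
  | zero => rw [h1, h2]
  | succ k ih =>
    obtain ⟨a, q, ha, hq, rfl⟩ := h1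
    obtain ⟨b, q', hb, hq', rfl⟩ := h2
    have := ih ha hb
    subst this
    rw [hh.uniq _ _ _ _ hq hq']

theorem sign_abs (d : SignType) : |(d : ℤ)| ≤ 1 := by cases d <;> simp

theorem Path.bound (hh : Hist n m T0 H C) {k p t p1} (h1 : Path n m H k p t p1) :
    |p1 - p| ≤ k * n := by
  have hn := hh.npos
  induction k generalizing p1 with
  | zero => rw [h1]; simp
  | succ k ih =>
    obtain ⟨a, q, ha, hq, rfl⟩ := h1
    have h1 := abs_le.1 (ih ha)
    have h2 := abs_le.1 (sign_abs q.1.dir)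
    push_cast
    rw [abs_le]
    constructor <;> nlinarith

theorem Path.append {k j p t p1 p2} (h1 : Path n m H k p t p1) (h2 : Path n m H j p1 (t + k * m) p2) :
    Path n m H (k + j) p t p2 := by
  induction j generalizing p2 with
  | zero => rw [h2]; exact h1
  | succ j ih =>
    obtain ⟨a, q, ha, hq, rfl⟩ := h2
    refine ⟨a, q, ih ha, ?_, rfl⟩
    have : t + ((k + j : ℕ) : ℤ) * m = t + k * m + j * m := by push_cast; ring
    change H a (t + ((k + j : ℕ) : ℤ) * m) q
    rw [this]; exact hq

theorem WL.path (hh : Hist n m T0 H C) {K pd I p0 t0 μ j} (w : WL n m H C K pd I p0 t0 μ j) (i : ℕ) (hi : i ≤ j) :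
    Path n m H i (p0 + (if K then 0 else 1) * n) t0 (p0 + off K pd I i * n) := by
  induction i with
  | zero => simp [Path, off]
  | succ i ih =>
    refine ⟨_, _, ih (by omega), w.elH hh i (by omega), ?_⟩
    simp only [off]; ring

theorem anc (hh : Hist n m T0 H C) {p t q} (hq : H p t q) (ht : T0 + 100 * m ≤ t) :
    ∃ (K : Bool) (k : ℕ) (p1 p2 : ℤ) (q2 : State), 28 ≤ k ∧ k ≤ 55 ∧
      Path n m H k (p1 + (if K then 0 else 1) * n) (t - k * m) p ∧
      CU n m H C p2 (t - k * m - 28 * m) q2 ∧ p1 = p2 + (q2.1.dir : ℤ) * (4 * n) ∧ |p - p2| ≤ 60 * n := by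
  have hn := hh.npos
  have hm := hh.mpos
  have hs : q.1.clk.val < 28 := q.1.clk.isLt
  generalize hsd : q.1.clk.val = s at hs
  have hsm : (s : ℤ) * m ≤ 27 * m := mul_le_mul_of_nonneg_right (by omega) hm.le
  obtain ⟨pd, I, p0, w, hp, hrow⟩ := box_trace hh s p t q hq hsd (by linarith)
  generalize q.1.kind = K at *
  obtain ⟨pd', I', ρ', w', -, hd, -⟩ := prev_box hh (w.start hh) (by linarith)
  have P1 := w.path hh s le_rfl
  rw [← hp] at P1
  have e1 : p0 + (if K = true then 0 else 1) * n - (if K = true then 0 else 1) * n - 4 * (pd : ℤ) * n =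
      p0 - 4 * (pd : ℤ) * n := by ring
  rw [e1] at w'
  have e2 : t - s * m - 28 * m = t - ((28 + s : ℕ) : ℤ) * m := by push_cast; ring
  rw [e2] at w'
  have P0 : Path n m H 28 (p0 - 4 * (pd : ℤ) * n + (if K then 0 else 1) * n) (t - ((28 + s : ℕ) : ℤ) * m)
      (p0 + (if K then 0 else 1) * n) := by
    refine ⟨_, _, w'.path hh 27 le_rfl, w'.fin, ?_⟩
    have h28 : off K pd' I' 28 = off K pd' I' 27 + ((row K pd' I' 27).dir : ℤ) := rfl
    rw [off_end, hd] at h28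
    have : ((row K pd' I' 27).dir : ℤ) = (if K then 0 else 1) + 4 * (pd : ℤ) - off K pd' I' 27 := by linarith
    simp only
    rw [this]; ring
  have P2 := P0.append (j := s) (p2 := p) (by
    have : t - ((28 + s : ℕ) : ℤ) * m + ((28 : ℕ) : ℤ) * m = t - s * m := by push_cast; ring
    rw [this]; exact P1)
  have hb := P2.bound hh
  have hT : T0 ≤ t - ((28 + s : ℕ) : ℤ) * m := by push_cast; linarith
  have hU : ∃ q1, HU n H (p0 - 4 * (pd : ℤ) * n) (t - ((28 + s : ℕ) : ℤ) * m) q1 := by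
    cases K
    · obtain ⟨ρ, h, -⟩ := HU_of_Y hh w' (by omega) hT
      exact ⟨_, h⟩
    · obtain ⟨ρ, h⟩ := HU_of_X hh w' (by omega) hT
      exact ⟨_, h⟩
  obtain ⟨q1, hU⟩ := hU
  obtain ⟨q2, ι, p2, hp2, hC, -⟩ := M3 hh hU (by push_cast; linarith)
  refine ⟨K, 28 + s, p0 - 4 * (pd : ℤ) * n, p2, q2, by omega, by omega, P2, hC, hp2, ?_⟩
  rw [hp2] at hb
  have h2 := abs_le.1 (sign_abs q2.1.dir)
  have h3 := abs_le.1 hb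
  have h4 : (0 : ℤ) ≤ (if K then 0 else 1) * n ∧ (if K then 0 else 1) * n ≤ n := by
    cases K <;> simp <;> omega
  have h5 : ((28 + s : ℕ) : ℤ) * n ≤ 55 * n := mul_le_mul_of_nonneg_right (by push_cast; omega) hn.le
  rw [abs_le]
  constructor <;> nlinarith

theorem count_base (hh : Hist n m T0 H C) (F : Finset (ℤ × ℤ)) (a L b : ℤ) (hL : 0 ≤ L)
    (hF : ∀ z ∈ F, (∃ q, C z.1 z.2 q) ∧ a ≤ z.1 ∧ z.1 ≤ a + L ∧ b ≤ z.2 ∧ z.2 < b + m) :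
    (F.card : ℤ) ≤ 2 * (L / n + 1) := by
  classical
  have hn := hh.npos
  have hq : 0 ≤ L / n := Int.ediv_nonneg hL hn.le
  have := Finset.card_le_card_of_injOn (s := F) (t := Finset.Icc 0 (L / n) ×ˢ (Finset.univ : Finset Bool))
    (fun z => ((z.1 - a) / n, decide (2 * (z.2 - b) < m))) ?_ ?_
  · rw [Finset.card_product, Int.card_Icc] at this
    simp at this
    omega
  · intro z hz
    obtain ⟨-, h1, h2, -⟩ := hF z hz
    simp only [Finset.coe_product, Set.mem_prod, Finset.mem_coe, Finset.mem_Icc, Finset.mem_univ, and_true]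
    exact ⟨Int.ediv_nonneg (by omega) hn.le, Int.ediv_le_ediv hn (by omega)⟩
  · intro z hz z' hz' he
    obtain ⟨⟨q, c1⟩, h1, h2, h3, h4⟩ := hF z hz
    obtain ⟨⟨q', c1'⟩, h1', h2', h3', h4'⟩ := hF z' hz'
    simp only [Prod.mk.injEq] at he
    obtain ⟨e1, e2⟩ := he
    have a1 := Int.emod_add_mul_ediv (z.1 - a) n
    have a2 := Int.emod_nonneg (z.1 - a) (show n ≠ 0 by omega)
    have a3 := Int.emod_lt_of_pos (z.1 - a) hn
    have b1 := Int.emod_add_mul_ediv (z'.1 - a) n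
    have b2 := Int.emod_nonneg (z'.1 - a) (show n ≠ 0 by omega)
    have b3 := Int.emod_lt_of_pos (z'.1 - a) hn
    rw [e1] at a1
    have hp : |z.1 - z'.1| < n := by rw [abs_lt]; constructor <;> linarith
    have ht : 2 * |z.2 - z'.2| ≤ m := by
      have e3 : (2 * (z.2 - b) < m) ↔ (2 * (z'.2 - b) < m) := by simpa using e2
      have : |2 * (z.2 - z'.2)| ≤ m := by
        rw [abs_le]
        by_cases h : 2 * (z.2 - b) < m
        · have := e3.1 h
          constructor <;> linarith
        · have : ¬ (2 * (z'.2 - b) < m) := fun h' => h (e3.2 h')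
          constructor <;> linarith
      rwa [abs_mul, abs_two] at this
    have := hh.excl _ _ _ _ _ _ c1 c1' hp ht
    exact Prod.ext this.1 this.2

theorem count_step (hh : Hist n m T0 H C) (F : Finset (ℤ × ℤ)) (a L b : ℤ) (hb : T0 + 100 * m ≤ b)
    (hF : ∀ z ∈ F, (∃ q, C z.1 z.2 q) ∧ a ≤ z.1 ∧ z.1 ≤ a + L ∧ b ≤ z.2 ∧ z.2 < b + m) :
    ∃ F' : Finset (ℤ × ℤ), F.card ≤ 2 * F'.card ∧
    ∀ z ∈ F', (∃ q, CU n m H C z.1 z.2 q) ∧ a - 60 * n ≤ z.1 ∧ z.1 ≤ (a - 60 * n) + (L + 120 * n) ∧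
      b - 83 * m ≤ z.2 ∧ z.2 < b - 83 * m + 28 * m := by
  classical
  have hn := hh.npos
  have hm := hh.mpos
  have key : ∀ z : ℤ × ℤ, ∃ (K : Bool) (k : ℕ) (p1 p2 : ℤ) (q2 : State), z ∈ F → 28 ≤ k ∧ k ≤ 55 ∧
      Path n m H k (p1 + (if K then 0 else 1) * n) (z.2 - k * m) z.1 ∧
      CU n m H C p2 (z.2 - k * m - 28 * m) q2 ∧ p1 = p2 + (q2.1.dir : ℤ) * (4 * n) ∧ |z.1 - p2| ≤ 60 * n := by
    intro z
    by_cases hz : z ∈ F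
    · obtain ⟨⟨q, c⟩, h1, h2, h3, h4⟩ := hF z hz
      obtain ⟨K, k, p1, p2, q2, h⟩ := anc hh (hh.sub _ _ _ c) (by linarith)
      exact ⟨K, k, p1, p2, q2, fun _ => h⟩
    · exact ⟨true, 0, 0, 0, (Role.fresh true 0, Role.fresh true 0), fun h => absurd h hz⟩
  choose fK fk fp1 fp2 fq2 hf using key
  let g : ℤ × ℤ → ℤ × ℤ := fun z => (fp2 z, z.2 - fk z * m - 28 * m)
  refine ⟨F.image g, ?_, ?_⟩
  · have := Finset.card_le_card_of_injOn (s := F) (t := F.image g ×ˢ (Finset.univ : Finset Bool))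
      (fun z => (g z, fK z)) ?_ ?_
    · rw [Finset.card_product] at this
      simp at this
      omega
    · intro z hz
      simp only [Finset.coe_product, Set.mem_prod, Finset.mem_coe, Finset.mem_univ, and_true]
      exact Finset.mem_image_of_mem g hz
    · intro z hz z' hz' he
      obtain ⟨k1, k2, P, c, e, -⟩ := hf z hz
      obtain ⟨k1', k2', P', c', e', -⟩ := hf z' hz'
      obtain ⟨-, h1, h2, h3, h4⟩ := hF z hz
      obtain ⟨-, h1', h2', h3', h4'⟩ := hF z' hz'
      simp only [Prod.mk.injEq, g] at he
      obtain ⟨⟨he1, he2⟩, he3⟩ := he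
      have hk : (fk z : ℤ) = fk z' := by
        by_contra hne
        rcases lt_or_gt_of_ne hne with h | h
        · have : (fk z : ℤ) + 1 ≤ fk z' := h
          nlinarith
        · have : (fk z' : ℤ) + 1 ≤ fk z := h
          nlinarith
      have hk' : fk z = fk z' := by exact_mod_cast hk
      rw [← hk] at he2
      have ht : z.2 = z'.2 := by linarith
      rw [← he1, ← hk', ← ht] at c'
      have := HU_uniq hh c.1 c'.1
      rw [← this, ← he1] at e'
      rw [← he3, ← hk', ← ht, e', ← e] at P'
      exact Prod.ext (P.uniq hh P') ht
  · intro z' hz'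
    obtain ⟨z, hz, rfl⟩ := Finset.mem_image.1 hz'
    obtain ⟨k1, k2, P, c, e, hd⟩ := hf z hz
    obtain ⟨-, h1, h2, h3, h4⟩ := hF z hz
    have hd' := abs_le.1 hd
    have m1 : 28 * m ≤ (fk z : ℤ) * m := mul_le_mul_of_nonneg_right (by omega) hm.le
    have m2 : (fk z : ℤ) * m ≤ 55 * m := mul_le_mul_of_nonneg_right (by omega) hm.le
    refine ⟨⟨_, c⟩, ?_, ?_, ?_, ?_⟩ <;> simp only [g] <;> linarith

theorem count (K : ℕ) : ∀ n m T0 : ℤ, 0 < n → 0 < m → ∃ c T1 : ℤ, 0 ≤ c ∧ ∀ H C : HT, Hist n m T0 H C →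
    ∀ (F : Finset (ℤ × ℤ)) (a L b : ℤ), 0 ≤ L → T1 ≤ b →
    (∀ z ∈ F, (∃ q, C z.1 z.2 q) ∧ a ≤ z.1 ∧ z.1 ≤ a + L ∧ b ≤ z.2 ∧ z.2 < b + m) →
    (F.card : ℤ) ≤ 2 ^ K * (2 * ((L + c) / (4 ^ K * n) + 1)) := by
  induction K with
  | zero =>
    intro n m T0 hn hm
    refine ⟨0, 0, le_rfl, fun H C hh F a L b hL hb hF => ?_⟩
    simpa using count_base hh F a L b hL hF
  | succ K ih =>
    intro n m T0 hn hm
    obtain ⟨c, T1, hc, h⟩ := ih (4 * n) (28 * m) (T0 + 28 * m) (by omega) (by omega)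
    refine ⟨c + 120 * n, max (T0 + 100 * m) (T1 + 83 * m), by omega, fun H C hh F a L b hL hb hF => ?_⟩
    obtain ⟨F', h1, h2⟩ := count_step hh F a L b (le_trans (le_max_left _ _) hb) hF
    have h3 := h _ _ hh.up F' (a - 60 * n) (L + 120 * n) (b - 83 * m) (by omega)
      (by have := le_trans (le_max_right _ _) hb; omega) h2
    have e1 : L + (c + 120 * n) = L + 120 * n + c := by ring
    have e2 : (4 : ℤ) ^ (K + 1) * n = 4 ^ K * (4 * n) := by ring
    rw [e1, e2, pow_succ]
    have h1' : (F.card : ℤ) ≤ 2 * F'.card := by exact_mod_cast h1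
    nlinarith

end hist
end ANDCA

namespace ANDCA

/-! ### The bottom level -/

def H0 (x : Conf) : HT := fun p t q => ∃ k : ℕ, t = k ∧ (Phi^[k] x) p = some q

theorem merge_some {a b c : Option State} {q} (h : merge a b c = some q) :
    a = some q ∨ b = some q ∨ c = some q := by
  rcases a with _ | a <;> rcases b with _ | b <;> rcases c with _ | c <;> simp_all [merge]

theorem send_some {x : Conf} {i d q} (h : send x i d = some q) :
    ∃ q0, x i = some q0 ∧ q0.1.dir = d ∧ stepS q0 (readS x i q0) = some q := by
  unfold send at h
  cases hx : x i with
  | none => simp [hx] at h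
  | some q0 =>
    simp only [hx] at h
    split_ifs at h with hd
    exact ⟨q0, rfl, hd, h⟩

theorem Phi_some {x : Conf} {i : ℤ} {q} (h : Phi x i = some q) :
    ∃ q0 p0, i = p0 + (q0.1.dir : ℤ) ∧ x p0 = some q0 ∧ stepS q0 (readS x p0 q0) = some q := by
  rcases merge_some h with h | h | h
  · obtain ⟨q0, h1, h2, h3⟩ := send_some h
    exact ⟨q0, i, by simp [h2], h1, h3⟩
  · obtain ⟨q0, h1, h2, h3⟩ := send_some h
    exact ⟨q0, i - 1, by simp [h2], h1, h3⟩
  · obtain ⟨q0, h1, h2, h3⟩ := send_some h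
    exact ⟨q0, i + 1, by simp [h2], h1, h3⟩

theorem stepS_some {q0 q : State} {ι} (h : stepS q0 ι = some q) :
    q0.1.step ι = some q.1 ∧ mailOk q0 q := by
  unfold stepS at h
  unfold mailOk
  cases h1 : q0.1.step ι with
  | none => simp [h1] at h
  | some r1 =>
    simp only [h1] at h
    cases h2 : q0.1.mact with
    | none =>
      simp only [h2, Option.some.injEq] at h ⊢
      subst h; exact ⟨rfl, rfl⟩
    | some s =>
      simp only [h2] at h ⊢
      cases h3 : q0.2.step s with
      | none => simp [h3] at h
      | some m1 =>
        simp only [h3, Option.some.injEq] at h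
        subst h; exact ⟨rfl, rfl⟩

theorem readS_Rd (x : Conf) (k : ℕ) (p : ℤ) (q : State) :
    Rd (H0 x) 1 p k q (readS (Phi^[k] x) p q) := by
  unfold Rd readS
  cases hs : q.1.src with
  | own j => rfl
  | left =>
    simp only
    cases h : (Phi^[k] x) (p - 1) with
    | none => left; rfl
    | some q' => right; exact ⟨q', ⟨k, rfl, h⟩, rfl⟩
  | right =>
    simp only
    cases h : (Phi^[k] x) (p + 1) with
    | none => left; rfl
    | some q' => right; exact ⟨q', ⟨k, rfl, h⟩, rfl⟩

theorem hist0 (x : Conf) : Hist 1 1 1 (H0 x) (H0 x) where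
  npos := one_pos
  mpos := one_pos
  sub := fun _ _ _ h => h
  uniq := by
    rintro p t q q' ⟨k, rfl, h⟩ ⟨k', e, h'⟩
    have : k = k' := by exact_mod_cast e
    subst this
    rw [h] at h'
    exact Option.some.inj h'
  pred := by
    rintro p t q ⟨k, rfl, h⟩ ht
    obtain ⟨j, rfl⟩ : ∃ j, k = j + 1 := ⟨k - 1, by omega⟩
    rw [Function.iterate_succ_apply'] at h
    obtain ⟨q0, p0, rfl, h1, h2⟩ := Phi_some h
    have e : ((j + 1 : ℕ) : ℤ) - 1 = j := by push_cast; ring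
    rw [e]
    refine ⟨q0, _, p0, by ring, ⟨j, rfl, h1⟩, readS_Rd x j p0 q0, ?_, ?_⟩
    · exact (stepS_some h2).1
    · exact (stepS_some h2).2
  excl := by
    rintro p1 p2 t1 t2 q1 q2 - - hp ht
    constructor
    · rw [abs_lt] at hp; omega
    · have : |t1 - t2| < 1 := by omega
      rw [abs_lt] at this; omega

/-- Asymptotic nilpotency in density, for finite windows. -/
theorem density (K : ℕ) : ∃ (c : ℤ) (k : ℕ), 0 ≤ c ∧ ∀ (x : Conf) (N : ℕ) (F : Finset ℤ),
    (∀ p ∈ F, -(N : ℤ) ≤ p ∧ p ≤ N ∧ (Phi^[k] x) p ≠ none) →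
    (F.card : ℤ) ≤ 2 ^ K * (2 * ((2 * N + c) / 4 ^ K + 1)) := by
  obtain ⟨c, T1, hc, h⟩ := count K 1 1 1 one_pos one_pos
  refine ⟨c, T1.toNat, hc, fun x N F hF => ?_⟩
  have := h _ _ (hist0 x) (F.map ⟨fun p => ((p, (T1.toNat : ℤ)) : ℤ × ℤ), fun a b h => congrArg Prod.fst h⟩)
    (-N) (2 * N) T1.toNat (by positivity) (Int.self_le_toNat T1) ?_
  · simpa using this
  · intro z hz
    simp only [Finset.mem_map] at hz
    obtain ⟨p, hp, rfl⟩ := hz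
    obtain ⟨h1, h2, h3⟩ := hF p hp
    obtain ⟨q, hq⟩ := Option.ne_none_iff_exists'.1 h3
    refine ⟨⟨q, T1.toNat, rfl, hq⟩, h1, ?_, le_rfl, ?_⟩
    · change p ≤ _; omega
    · change (T1.toNat : ℤ) < _; omega

end ANDCA

namespace ANDCA

/-! ### Simulation -/

structure Good (x : Conf) : Prop where
  st : ∀ p q, x p = some q → ∃ q', stepS q (readS x p q) = some q'
  mono : ∀ p p' q q', x p = some q → x p' = some q' → p < p' →
    p + (q.1.dir : ℤ) < p' + (q'.1.dir : ℤ)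

theorem Good.inj {x : Conf} (g : Good x) {p p' q q'} (h : x p = some q) (h' : x p' = some q')
    (e : p + (q.1.dir : ℤ) = p' + (q'.1.dir : ℤ)) : p = p' := by
  rcases lt_trichotomy p p' with l | l | l
  · have := g.mono _ _ _ _ h h' l; omega
  · exact l
  · have := g.mono _ _ _ _ h' h l; omega

theorem Good.phi {x : Conf} (g : Good x) {p q q'} (h : x p = some q)
    (hs : stepS q (readS x p q) = some q') : Phi x (p + (q.1.dir : ℤ)) = some q' := by
  have key : ∀ i d, send x i d ≠ none → i + (d : ℤ) = p + (q.1.dir : ℤ) → i = p ∧ d = q.1.dir := by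
    intro i d hn e
    obtain ⟨v, hv⟩ := Option.ne_none_iff_exists'.1 hn
    obtain ⟨q0, h1, h2, h3⟩ := send_some hv
    have := g.inj h1 h (by rw [h2]; exact e)
    subst this
    rw [h] at h1
    obtain rfl := Option.some.inj h1
    exact ⟨rfl, h2.symm⟩
  have self : send x p q.1.dir = some q' := by simp [send, h, hs]
  have k0 := key (p + (q.1.dir : ℤ)) 0
  have k1 := key (p + (q.1.dir : ℤ) - 1) 1
  have k2 := key (p + (q.1.dir : ℤ) + 1) (-1)
  unfold Phi
  generalize ed : q.1.dir = d at *
  cases d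
  · simp only [SignType.zero_eq_zero, SignType.coe_zero, add_zero] at *
    have h1 : send x (p - 1) 1 = none := by
      by_contra hc; have := k1 hc (by simp); omega
    have h2 : send x (p + 1) (-1) = none := by
      by_contra hc; have := k2 hc (by simp); omega
    rw [self, h1, h2]; rfl
  · simp only [SignType.neg_eq_neg_one, SignType.coe_neg_one] at *
    have h1 : send x (p + -1) 0 = none := by
      by_contra hc; have := k0 hc (by simp); omega
    have h2 : send x (p + -1 - 1) 1 = none := by
      by_contra hc; have := k1 hc (by simp); omega
    rw [h1, h2, show p + -1 + 1 = p by ring, self]; rfl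
  · simp only [SignType.pos_eq_one, SignType.coe_one] at *
    have h1 : send x (p + 1) 0 = none := by
      by_contra hc; have := k0 hc (by simp); omega
    have h2 : send x (p + 1 + 1) (-1) = none := by
      by_contra hc; have := k2 hc (by simp); omega
    rw [h1, h2, show p + 1 - 1 = p by ring, self]; rfl

def chO (o : Option State) (j : Fin 3) : D :=
  match o with
  | none => d0
  | some q => q.1.chunk j

def tgO (o : Option State) (t : Tag) : Option Tag :=
  match o with
  | none => none
  | some _ => some t

def ownIdx : Src → Fin 3
  | Src.own j => j
  | _ => 0

/-- The input of the particle of kind `K` in box `i` at row `j`. -/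
def inp (y : Conf) (P : ℤ → SignType) (i : ℤ) (q : State) (K : Bool) (j : ℕ) : Sym :=
  if K then
    if j = 0 then (none, q.1.chunk 0)
    else if j = 1 then (none, q.1.chunk 1)
    else if j = 2 then (none, q.1.chunk 2)
    else if j = 7 then (some ⟨false, 7, P i⟩, q.2.chunk (ownIdx q.1.src))
    else if j = 10 then (tgO (y (i - 1)) ⟨false, 10, P (i - 1)⟩, chO (y (i - 1)) 0)
    else if j = 11 then (tgO (y (i - 1)) ⟨false, 11, P (i - 1)⟩, chO (y (i - 1)) 1)
    else if j = 22 then (some ⟨false, 22, P i⟩, { d0 with tag := (chO (y (i + 1)) 0).tag })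
    else if j = 23 then (some ⟨false, 23, P i⟩, chO (y (i + 1)) 1)
    else (none, q.1.chunk 0)
  else
    if j = 3 then (some ⟨true, 3, P i⟩, q.1.chunk 0)
    else if j = 4 then (some ⟨true, 4, P i⟩, q.1.chunk 1)
    else if j = 5 then (some ⟨true, 5, P i⟩, q.1.chunk 2)
    else if j = 6 then (none, q.2.chunk (ownIdx q.1.src))
    else if j = 10 then (tgO (y (i + 1)) ⟨true, 10, P (i + 1)⟩, chO (y (i + 1)) 0)
    else if j = 11 then (tgO (y (i + 1)) ⟨true, 11, P (i + 1)⟩, chO (y (i + 1)) 1)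
    else (none, q.2.chunk 0)

def mailK (K : Bool) (q : State) : Role := if K then q.1 else q.2

section sim
variable (y : Conf) (P : ℤ → SignType)

noncomputable def PX (i : ℤ) (q : State) (K : Bool) (s : ℕ) : ℤ :=
  4 * i + off K (P i) (inp y P i q K) s

noncomputable def RX (i : ℤ) (q : State) (K : Bool) (s : ℕ) : Role :=
  row K (P i) (inp y P i q K) s

structure Repd (s : ℕ) (z : Conf) : Prop where
  fwd : ∀ i q, y i = some q → ∀ K, z (PX y P i q K s) = some (RX y P i q K s, mailK K q)
  bwd : ∀ p v, z p = some v → ∃ i q K, y i = some q ∧ p = PX y P i q K s ∧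
    v = (RX y P i q K s, mailK K q)

theorem V0_27 (i q K) {s : ℕ} (h1 : 4 ≤ s) (h2 : s ≤ 27) : (RX y P i q K s).V0 = q.1.chunk 0 := by
  cases K
  · rw [RX, Y_V0 _ _ (by omega) (by omega)]; simp [inp]
  · rw [RX, X_V0 _ _ (by omega) (by omega)]; simp [inp]

theorem chunk0_dir (r : Role) : (r.chunk 0).dir = r.dir := by simp [Role.chunk]

theorem PX_early (i q K) {s : ℕ} (h : s ≤ 24) : PX y P i q K s = 4 * i + base K s := by
  rw [PX, off_base _ _ _ _ h]

theorem PX_late (i q K) {s : ℕ} (h : 24 ≤ s) (h' : s ≤ 28) :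
    PX y P i q K s = 4 * i + base K 24 + (q.1.dir : ℤ) * (s - 24) := by
  have := V0_27 y P i q K (s := 27) (by omega) (by omega)
  rw [RX] at this
  rw [PX, off_late _ _ _ _ h h', this, chunk0_dir]; ring

theorem base_range (K : Bool) (s : ℕ) :
    (K = true ∧ base K s = 0) ∨ (K = false ∧ 1 ≤ base K s ∧ base K s ≤ 3) := by
  cases K
  · right; simp only [base]; refine ⟨trivial, ?_⟩
    split_ifs <;> simp_all
  · left; simp [base]

theorem PX_lt (g : Good y) {i i' q q' K K' s} (hs : s ≤ 28) (h : y i = some q) (h' : y i' = some q')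
    (hl : i < i' ∨ (i = i' ∧ K = true ∧ K' = false)) : PX y P i q K s < PX y P i' q' K' s := by
  rcases le_or_gt s 24 with h24 | h24
  · rw [PX_early _ _ _ _ _ h24, PX_early _ _ _ _ _ h24]
    have b1 := base_range K s
    have b2 := base_range K' s
    rcases hl with hl | ⟨rfl, rfl, rfl⟩
    · omega
    · simp at b1 b2; omega
  · rw [PX_late _ _ _ _ _ h24.le hs, PX_late _ _ _ _ _ h24.le hs]
    have b1 : base true 24 = 0 := by simp [base]
    have b2 : base false 24 = 1 := by simp [base]
    rcases hl with hl | ⟨rfl, rfl, rfl⟩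
    · have := g.mono _ _ _ _ h h' hl
      generalize (q.1.dir : ℤ) = d at *
      generalize (q'.1.dir : ℤ) = d' at *
      have b3 : base K 24 ≤ 1 := by cases K <;> simp [b1, b2]
      have b4 : 0 ≤ base K' 24 := by cases K' <;> simp [b1, b2]
      interval_cases s <;> norm_num <;> omega
    · rw [h] at h'
      obtain rfl := Option.some.inj h'
      rw [b1, b2]; omega

theorem PX_lt_inv (g : Good y) {i i' q q' K K' s} (hs : s ≤ 28) (h : y i = some q)
    (h' : y i' = some q') (hl : PX y P i q K s < PX y P i' q' K' s) :
    i < i' ∨ (i = i' ∧ K = true ∧ K' = false) := by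
  by_contra hc
  have : (i' < i ∨ (i' = i ∧ K' = true ∧ K = false)) ∨ (i = i' ∧ K = K') := by
    cases K <;> cases K' <;> simp_all <;> omega
  rcases this with h1 | ⟨rfl, rfl⟩
  · have := PX_lt y P g (K := K') (K' := K) hs h' h h1
    omega
  · rw [h] at h'
    obtain rfl := Option.some.inj h'
    exact lt_irrefl _ hl

variable {y P}

theorem Repd.blank {z : Conf} {s : ℕ} (R : Repd y P s z) {p : ℤ}
    (h : ∀ i q K, y i = some q → p ≠ PX y P i q K s) : z p = none := by
  by_contra hc
  obtain ⟨v, hv⟩ := Option.ne_none_iff_exists'.1 hc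
  obtain ⟨i, q, K, h1, h2, -⟩ := R.bwd _ _ hv
  exact h _ _ _ h1 h2

theorem Repd.out {z : Conf} {s : ℕ} (R : Repd y P s z) (hs : s ≤ 24) (i : ℤ) (K : Bool) :
    outO (z (4 * i + base K s)) = match y i with
      | none => (none, d0)
      | some q => (RX y P i q K s).out := by
  cases hy : y i with
  | none =>
    rw [R.blank]; · rfl
    intro i' q' K' h1 h2
    rw [PX_early _ _ _ _ _ hs] at h2
    have b1 := base_range K s
    have b2 := base_range K' s
    have : i = i' := by omega
    rw [this, h1] at hy; cases hy
  | some q =>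
    have := R.fwd i q hy K
    rw [PX_early _ _ _ _ _ hs] at this
    rw [this]; rfl

theorem srcX_own (pd I) {s : ℕ} (hs : s < 28) (h : s ≠ 1 ∧ s ≠ 2 ∧ s ≠ 7 ∧ s ≠ 10 ∧ s ≠ 11 ∧ s ≠ 22 ∧ s ≠ 23) :
    (row true pd I s).src = Src.own 0 := by
  simp [Role.src, ck_eq hs, h]

theorem srcY_own (pd I) {s : ℕ} (hs : s < 28) (h : s ≠ 3 ∧ s ≠ 4 ∧ s ≠ 5 ∧ s ≠ 6 ∧ s ≠ 10 ∧ s ≠ 11) :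
    (row false pd I s).src = Src.own 0 := by
  simp [Role.src, ck_eq hs, h]

theorem srcY6' (pd I) : (row false pd I 6).src = Src.own (ownIdx (I 3).2.src) := by
  simp only [Role.src, row_kind, row_clk, ck_eq (show 6 < 28 by omega), Y_V0 pd I (j := 6) (by omega) (by omega)]
  cases (I 3).2.src <;> simp [ownIdx]

theorem Repd.readX {z : Conf} {s : ℕ} (R : Repd y P s z) (hs : s < 28) {i q} (h : y i = some q) :
    readS z (PX y P i q true s) (RX y P i q true s, mailK true q) = inp y P i q true s := by
  by_cases hown : s ≠ 1 ∧ s ≠ 2 ∧ s ≠ 7 ∧ s ≠ 10 ∧ s ≠ 11 ∧ s ≠ 22 ∧ s ≠ 23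
  · simp only [readS, RX, srcX_own _ _ hs hown]
    simp [inp, hown, mailK]
  have hc : s = 1 ∨ s = 2 ∨ s = 7 ∨ s = 10 ∨ s = 11 ∨ s = 22 ∨ s = 23 := by omega
  rcases hc with rfl | rfl | rfl | rfl | rfl | rfl | rfl
  · simp [readS, RX, srcX1, inp, mailK]
  · simp [readS, RX, srcX2, inp, mailK]
  · have := R.out (by omega) i false
    rw [h] at this
    simp only [readS, RX, srcX7]
    rw [PX_early _ _ _ _ _ (by omega)]
    simp only [base] at this ⊢
    norm_num at this ⊢
    rw [this]
    simp [RX, Role.out, Role.tg, datY7, inp, ck]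
  · have := R.out (by omega) (i - 1) false
    simp only [readS, RX, srcX10]
    rw [PX_early _ _ _ _ _ (by omega)]
    simp only [base] at this ⊢
    norm_num at this ⊢
    rw [show 4 * i - 1 = 4 * (i - 1) + 3 by ring, this]
    cases h' : y (i - 1) <;> simp [RX, Role.out, Role.tg, datY10, inp, ck, h', tgO, chO]
  · have := R.out (by omega) (i - 1) false
    simp only [readS, RX, srcX11]
    rw [PX_early _ _ _ _ _ (by omega)]
    simp only [base] at this ⊢
    norm_num at this ⊢
    rw [show 4 * i - 1 = 4 * (i - 1) + 3 by ring, this]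
    cases h' : y (i - 1) <;> simp [RX, Role.out, Role.tg, datY11, inp, ck, h', tgO, chO]
  · have := R.out (by omega) i false
    rw [h] at this
    simp only [readS, RX, srcX22]
    rw [PX_early _ _ _ _ _ (by omega)]
    simp only [base] at this ⊢
    norm_num at this ⊢
    rw [this]
    cases h' : y (i + 1) <;>
    simp [RX, Role.out, Role.tg, Role.dat, R_l1, guard, ck_eq, inp, tgO, chO, h', d0]
  · have := R.out (by omega) i false
    rw [h] at this
    simp only [readS, RX, srcX23]
    rw [PX_early _ _ _ _ _ (by omega)]
    simp only [base] at this ⊢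
    norm_num at this ⊢
    rw [this]
    simp [RX, Role.out, Role.tg, datY23, inp, ck]

theorem Repd.readY {z : Conf} {s : ℕ} (R : Repd y P s z) (hs : s < 28) {i q} (h : y i = some q) :
    readS z (PX y P i q false s) (RX y P i q false s, mailK false q) = inp y P i q false s := by
  by_cases hown : s ≠ 3 ∧ s ≠ 4 ∧ s ≠ 5 ∧ s ≠ 6 ∧ s ≠ 10 ∧ s ≠ 11
  · simp only [readS, RX, srcY_own _ _ hs hown]
    simp [inp, hown, mailK]
  have hc : s = 3 ∨ s = 4 ∨ s = 5 ∨ s = 6 ∨ s = 10 ∨ s = 11 := by omega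
  rcases hc with rfl | rfl | rfl | rfl | rfl | rfl
  · have := R.out (by omega) i true
    rw [h] at this
    simp only [readS, RX, srcY3]
    rw [PX_early _ _ _ _ _ (by omega)]
    simp only [base] at this ⊢
    norm_num at this ⊢
    rw [this]
    simp [RX, Role.out, Role.tg, datX3, inp, ck]
  · have := R.out (by omega) i true
    rw [h] at this
    simp only [readS, RX, srcY4]
    rw [PX_early _ _ _ _ _ (by omega)]
    simp only [base] at this ⊢
    norm_num at this ⊢
    rw [this]
    simp [RX, Role.out, Role.tg, datX4, inp, ck]
  · have := R.out (by omega) i true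
    rw [h] at this
    simp only [readS, RX, srcY5]
    rw [PX_early _ _ _ _ _ (by omega)]
    simp only [base] at this ⊢
    norm_num at this ⊢
    rw [this]
    simp [RX, Role.out, Role.tg, datX5, inp, ck]
  · simp only [readS, RX, srcY6']
    simp [inp, mailK, Role.chunk]
  · have := R.out (by omega) (i + 1) true
    simp only [readS, RX, srcY10]
    rw [PX_early _ _ _ _ _ (by omega)]
    simp only [base] at this ⊢
    norm_num at this ⊢
    rw [show 4 * i + 3 + 1 = 4 * (i + 1) by ring, this]
    cases h' : y (i + 1) <;> simp [RX, Role.out, Role.tg, datX10, inp, ck, h', tgO, chO]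
  · have := R.out (by omega) (i + 1) true
    simp only [readS, RX, srcY11]
    rw [PX_early _ _ _ _ _ (by omega)]
    simp only [base] at this ⊢
    norm_num at this ⊢
    rw [show 4 * i + 3 + 1 = 4 * (i + 1) by ring, this]
    cases h' : y (i + 1) <;> simp [RX, Role.out, Role.tg, datX11, inp, ck, h', tgO, chO]

theorem Repd.read {z : Conf} {s : ℕ} (R : Repd y P s z) (hs : s < 28) {i q} (h : y i = some q) (K) :
    readS z (PX y P i q K s) (RX y P i q K s, mailK K q) = inp y P i q K s := by
  cases K
  · exact R.readY hs h
  · exact R.readX hs h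

theorem not_dies {s : ℕ} (hs : s < 28) (i q K) :
    ¬ (RX y P i q K s).dies (inp y P i q K s) := by
  cases K
  · simp only [Role.dies, RX, row_kind, row_clk, row_pd, ck_eq hs]
    rintro (⟨-, h, h2⟩ | ⟨h, -⟩)
    · apply h2
      rcases h with h | h | h <;> simp at h <;> subst h <;> simp [inp, ck]
    · cases h
  · simp only [Role.dies, RX, row_kind, row_clk, row_pd, ck_eq hs]
    rintro (⟨h, -⟩ | ⟨-, h, h2⟩)
    · cases h
    · apply h2
      simp at h; subst h; simp [inp]

theorem step_lt {s : ℕ} (hs : s < 27) (i q K) (m : Role) :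
    stepS (RX y P i q K s, m) (inp y P i q K s) = some (RX y P i q K (s + 1), m) := by
  have h1 := not_dies (y := y) (P := P) (show s < 28 by omega) i q K
  unfold RX at *
  simp only [stepS, step_row _ _ _ hs, mact_row _ _ _ hs, h1, if_false]
  rfl

end sim
end ANDCA

namespace ANDCA

section sim
variable {y : Conf} {P : ℤ → SignType}

theorem iota_27 (i q) (h : y i = some q) : (RX y P i q true 27).iota = readS y i q := by
  have h0 : (q.1.chunk 0).src = q.1.src := by simp [Role.chunk]
  simp only [Role.iota, readS]
  rw [V0_27 _ _ _ _ _ (by omega) (by omega), h0]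
  cases hs : q.1.src with
  | own j =>
    simp only [RX]
    rw [X_w _ _ (by omega) (by omega)]
    simp [inp, hs, ownIdx]
  | left =>
    have e1 := R_l1 true (P i) (inp y P i q true) (j := 27) (by omega) (by omega)
    have e2 := R_l2 true (P i) (inp y P i q true) (j := 27) (by omega) (by omega)
    rw [← RX] at e1 e2
    simp only [e1, e2]
    cases h' : y (i - 1) <;> simp [inp, h', tgO, chO, guard, outO, Role.chunk, Role.out]
  | right =>
    have e1 := R_e1 true (P i) (inp y P i q true) (j := 27) (by omega) (by omega)
    have e2 := R_e2 true (P i) (inp y P i q true) (j := 27) (by omega) (by omega)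
    rw [← RX] at e1 e2
    simp only [e1, e2]
    cases h' : y (i + 1) <;> simp [inp, h', tgO, chO, guard, outO, Role.chunk, Role.out, d0]

theorem mact_27 (i q) : (RX y P i q false 27).mact = q.1.mact := by
  have h1 : (RX y P i q false 27).clk = 27 := by simp [RX, ck]
  have h2 : (RX y P i q false 27).kind = false := by simp [RX]
  have h3 : (RX y P i q false 27).V2 = q.1.chunk 2 := by
    rw [RX, Y_V2 _ _ (by omega) (by omega)]; simp [inp]
  rw [Role.mact, if_pos h1, h2, V0_27 _ _ _ _ _ (by omega) (by omega), h3]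
  cases h : q.1.mact <;> simp [Role.chunk, h]

theorem mact_27X (i q) (h : y i = some q) : (RX y P i q true 27).mact = some (readS y i q) := by
  have h1 : (RX y P i q true 27).clk = 27 := by simp [RX, ck]
  have h2 : (RX y P i q true 27).kind = true := by simp [RX]
  rw [Role.mact, if_pos h1, h2, iota_27 _ _ h]; rfl

theorem step_27 {i q q'} (K) (h : y i = some q) (hq : stepS q (readS y i q) = some q') :
    stepS (RX y P i q K 27, mailK K q) (inp y P i q K 27) =
      some (Role.fresh K q.1.dir, mailK K q') := by
  obtain ⟨h1, h2⟩ := stepS_some hq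
  have hc : (RX y P i q K 27).clk = 27 := by simp [RX, ck]
  have hk : (RX y P i q K 27).kind = K := by simp [RX]
  have hstep : (RX y P i q K 27).step (inp y P i q K 27) = some (Role.fresh K q.1.dir) := by
    rw [Role.step, if_neg (not_dies (by omega) _ _ _), if_pos hc, hk,
      V0_27 _ _ _ _ _ (by omega) (by omega), chunk0_dir]
  cases K
  · unfold mailOk at h2
    cases hm : q.1.mact with
    | none => simp only [hm] at h2; simp [stepS, hstep, mact_27, hm, mailK, h2]
    | some s => simp only [hm] at h2; simp [stepS, hstep, mact_27, hm, mailK, h2]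
  · simp [stepS, hstep, mact_27X _ _ h, mailK, h1]

theorem Repd.good {z : Conf} {s : ℕ} (R : Repd y P s z) (g : Good y) (hs : s < 28) : Good z where
  st := by
    intro p v hv
    obtain ⟨i, q, K, h1, rfl, rfl⟩ := R.bwd _ _ hv
    rw [R.read hs h1]
    rcases Nat.lt_succ_iff_lt_or_eq.1 hs with h27 | rfl
    · exact ⟨_, step_lt h27 _ _ _ _⟩
    · obtain ⟨q', hq'⟩ := g.st _ _ h1
      exact ⟨_, step_27 K h1 hq'⟩
  mono := by
    intro p p' v v' hv hv' hl
    obtain ⟨i, q, K, h1, rfl, rfl⟩ := R.bwd _ _ hv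
    obtain ⟨i', q', K', h1', rfl, rfl⟩ := R.bwd _ _ hv'
    have o := PX_lt_inv y P g (by omega) h1 h1' hl
    have := PX_lt y P g (s := s + 1) (by omega) h1 h1' o
    simp only [PX, RX, off] at this ⊢
    linarith

theorem Repd.succ {z : Conf} {s : ℕ} (R : Repd y P s z) (g : Good y) (hs : s < 27) :
    Repd y P (s + 1) (Phi z) where
  fwd := by
    intro i q h K
    have := (R.good g (by omega)).phi (R.fwd i q h K) (by rw [R.read (by omega) h]; exact step_lt hs _ _ _ _)
    rw [← this]; simp only [PX, RX, off]; congr 1; ring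
  bwd := by
    intro p v hv
    obtain ⟨q0, p0, rfl, h2, h3⟩ := Phi_some hv
    obtain ⟨i, q, K, h1, rfl, rfl⟩ := R.bwd _ _ h2
    rw [R.read (by omega) h1, step_lt hs] at h3
    refine ⟨i, q, K, h1, ?_, (Option.some.inj h3).symm⟩
    simp only [PX, RX, off]; ring

/-- `x` represents `y`. -/
def Rep (y x : Conf) : Prop := ∃ P, Repd y P 0 x

theorem Repd.iter {z : Conf} (R : Repd y P 0 z) (g : Good y) {s : ℕ} (hs : s ≤ 27) :
    Repd y P s (Phi^[s] z) := by
  induction s with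
  | zero => exact R
  | succ s ih =>
    rw [Function.iterate_succ_apply']
    exact (ih (by omega)).succ g (by omega)

theorem Repd.last {z : Conf} (R : Repd y P 27 z) (g : Good y) : Rep (Phi y) (Phi z) := by
  have gz := R.good g (by omega)
  -- previous directions
  have hP : ∃ P' : ℤ → SignType, ∀ i q, y i = some q → P' (i + (q.1.dir : ℤ)) = q.1.dir := by
    classical
    refine ⟨fun p => if h : ∃ d : SignType, ∃ q, y (p - (d : ℤ)) = some q ∧ q.1.dir = d then h.choose else 0, ?_⟩
    intro i q h
    have hex : ∃ d : SignType, ∃ q', y (i + (q.1.dir : ℤ) - (d : ℤ)) = some q' ∧ q'.1.dir = d :=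
      ⟨q.1.dir, q, by rw [add_sub_cancel_right]; exact h, rfl⟩
    simp only [dif_pos hex]
    obtain ⟨q', h1, h2⟩ := hex.choose_spec
    have := g.inj h1 h (by rw [h2]; ring)
    rw [this, h] at h1
    obtain rfl := Option.some.inj h1
    exact h2.symm
  obtain ⟨P', hP'⟩ := hP
  have pos : ∀ i q K P'' (q' : State), PX y P i q K 27 + ((RX y P i q K 27).dir : ℤ) =
      PX (Phi y) P'' (i + (q.1.dir : ℤ)) q' K 0 := by
    intro i q K P'' q'
    rw [PX_early _ _ _ _ K (show 0 ≤ 24 by omega), PX_late _ _ _ _ _ (show 24 ≤ 27 by omega) (by omega)]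
    have e1 : (RX y P i q K 27).dir = q.1.dir := by
      rw [RX, dir_late _ _ _ _ (by omega) (by omega), ← RX, V0_27 _ _ _ _ _ (by omega) (by omega), chunk0_dir]
    rw [e1]
    have e2 : base K 24 = base K 0 := by cases K <;> simp [base]
    rw [e2]; push_cast; ring
  refine ⟨P', ⟨?_, ?_⟩⟩
  · intro p q' h K
    obtain ⟨q, i, rfl, h1, h2⟩ := Phi_some h
    have := gz.phi (R.fwd i q h1 K) (by rw [R.read (by omega) h1]; exact step_27 K h1 h2)
    rw [← pos i q K P' q', this]
    simp [RX, row, hP' _ _ h1]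
  · intro p v hv
    obtain ⟨q0, p0, rfl, h2, h3⟩ := Phi_some hv
    obtain ⟨i, q, K, h1, rfl, rfl⟩ := R.bwd _ _ h2
    obtain ⟨q', hq'⟩ := g.st _ _ h1
    rw [R.read (by omega) h1, step_27 K h1 hq'] at h3
    refine ⟨i + (q.1.dir : ℤ), q', K, g.phi h1 hq', pos _ _ _ _ _, ?_⟩
    rw [← Option.some.inj h3]
    simp [RX, row, hP' _ _ h1]

theorem Rep.twentyeight {z : Conf} (R : Rep y z) (g : Good y) : Rep (Phi y) (Phi^[28] z) := by
  obtain ⟨P, R⟩ := R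
  have := (R.iter g (s := 27) le_rfl).last g
  rwa [← Function.iterate_succ_apply' Phi 27] at this

/-- A resting particle at the origin. -/
def Rest (x : Conf) : Prop := ∃ q, x 0 = some q ∧ q.1.dir = 0

theorem Rep.mid {z : Conf} (R : Rep y z) (g : Good y) (hr : Rest y) {s : ℕ} (hs : s < 28) :
    Good (Phi^[s] z) ∧ Rest (Phi^[s] z) := by
  obtain ⟨P, R⟩ := R
  have R' := R.iter g (s := s) (by omega)
  refine ⟨R'.good g hs, ?_⟩
  obtain ⟨q, h1, h2⟩ := hr
  have h3 := R'.fwd 0 q h1 true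
  have hp : PX y P 0 q true s = 0 := by
    rcases le_total s 24 with h | h
    · rw [PX_early _ _ _ _ _ h]; simp [base]
    · rw [PX_late _ _ _ _ _ h (by omega), h2]; simp [base]
  rw [hp] at h3
  refine ⟨_, h3, ?_⟩
  rcases lt_or_ge s 24 with h | h
  · have e := dir_early true (P 0) (inp y P 0 q true) s h
    simp only [base, if_true, sub_zero] at e
    simp only [RX]
    revert e
    cases (row true (P 0) (inp y P 0 q true) s).dir <;> simp
  · simp only
    rw [RX, dir_late _ _ _ _ h hs, ← RX, V0_27 _ _ _ _ _ (by omega) (by omega), chunk0_dir, h2]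

theorem exists_rep (y : Conf) : ∃ z, Rep y z := by
  refine ⟨fun p => if p % 4 = 0 then (y (p / 4)).map fun q => (Role.fresh true 0, q.1)
    else if p % 4 = 1 then (y (p / 4)).map fun q => (Role.fresh false 0, q.2) else none, fun _ => 0, ?_, ?_⟩
  · intro i q h K
    rw [PX_early _ _ _ _ _ (by omega)]
    cases K
    · have e1 : (4 * i + base false 0) % 4 = 1 := by simp [base]
      have e2 : (4 * i + base false 0) / 4 = i := by simp [base]; omega
      simp [e1, e2, h, RX, row, mailK]
    · have e1 : (4 * i + base true 0) % 4 = 0 := by simp [base]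
      have e2 : (4 * i + base true 0) / 4 = i := by simp [base]
      simp only [e1, e2, h, RX, row, mailK]; simp
  · intro p v hv
    split_ifs at hv with h1 h2
    · obtain ⟨q, hq, rfl⟩ := Option.map_eq_some_iff.1 hv
      refine ⟨p / 4, q, true, hq, ?_, rfl⟩
      rw [PX_early _ _ _ _ _ (by omega)]; simp [base]; omega
    · obtain ⟨q, hq, rfl⟩ := Option.map_eq_some_iff.1 hv
      refine ⟨p / 4, q, false, hq, ?_, rfl⟩
      rw [PX_early _ _ _ _ _ (by omega)]; simp [base]; omega

theorem Rep.long {z : Conf} (R : Rep y z) (N : ℕ)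
    (h : ∀ t < N, Good (Phi^[t] y) ∧ Rest (Phi^[t] y)) :
    ∀ a ≤ N, Rep (Phi^[a] y) (Phi^[28 * a] z) := by
  intro a
  induction a with
  | zero => intro _; exact R
  | succ a ih =>
    intro ha
    have := (ih (by omega)).twentyeight (h a (by omega)).1
    rw [← Function.iterate_succ_apply' Phi, ← Function.iterate_add_apply] at this
    rwa [show 28 * (a + 1) = 28 + 28 * a by ring]

theorem exists_long (k : ℕ) : ∃ x : Conf, ∀ t < 28 ^ k, Good (Phi^[t] x) ∧ Rest (Phi^[t] x) := by
  induction k with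
  | zero =>
    refine ⟨fun p => if p = 0 then some (Role.fresh true 0, Role.fresh true 0) else none, fun t ht => ?_⟩
    obtain rfl : t = 0 := by simpa using ht
    simp only [Function.iterate_zero, id]
    refine ⟨⟨?_, ?_⟩, ?_⟩
    · intro p q h
      split_ifs at h with hp
      obtain rfl := Option.some.inj h
      simp [stepS, Role.step, Role.dies, Role.fresh, Role.mact]
    · intro p p' q q' h h' hl
      split_ifs at h with hp
      split_ifs at h' with hp'
      omega
    · exact ⟨_, if_pos rfl, by simp [Role.dir, Role.fresh]⟩
  | succ k ih =>
    obtain ⟨y, hy⟩ := ih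
    obtain ⟨z, R⟩ := exists_rep y
    refine ⟨z, fun t ht => ?_⟩
    have hlt : t / 28 < 28 ^ k := by
      rw [Nat.div_lt_iff_lt_mul (by norm_num)]; rw [pow_succ] at ht; exact ht
    have h1 := (R.long _ hy (t / 28) hlt.le).mid (hy _ hlt).1 (hy _ hlt).2 (s := t % 28) (Nat.mod_lt _ (by norm_num))
    rw [← Function.iterate_add_apply, Nat.mod_add_div] at h1
    exact h1

theorem exists_alive (N : ℕ) : ∃ x : Conf, ∀ t < N, (Phi^[t] x) 0 ≠ none := by
  obtain ⟨x, h⟩ := exists_long N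
  refine ⟨x, fun t ht => ?_⟩
  obtain ⟨q, h1, -⟩ := (h t (ht.trans (Nat.lt_pow_self (by norm_num)))).2
  rw [h1]; simp

end sim
end ANDCA

namespace ANDCA

/-! ### Krylov–Bogoliubov -/

theorem krylov {X : Type} [TopologicalSpace X] [CompactSpace X] [T2Space X] [MeasurableSpace X]
    [BorelSpace X] [HasOuterApproxClosed X] (Ψ : X → X) (hΨ : Continuous Ψ) (C : Set X)
    (hC : IsClopen C) (x : X) (hx : ∀ t, Ψ^[t] x ∈ C) :
    ∃ μ : Measure X, IsProbabilityMeasure μ ∧ (∀ A, MeasurableSet A → μ (Ψ ⁻¹' A) = μ A) ∧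
      μ C ≠ 0 := by
  classical
  -- averages
  let ν : ℕ → Measure X := fun N => ((N + 1 : ℕ) : ENNReal)⁻¹ • ∑ t ∈ Finset.range (N + 1), Measure.dirac (Ψ^[t] x)
  have hν : ∀ N, IsProbabilityMeasure (ν N) := by
    intro N
    constructor
    simp only [ν, Measure.smul_apply, Measure.coe_finsetSum, Finset.sum_apply, measure_univ,
      Finset.sum_const, Finset.card_range, smul_eq_mul, nsmul_eq_mul, mul_one]
    exact ENNReal.inv_mul_cancel (by simp) (by simp)
  have hInt : ∀ (N : ℕ) (f : BoundedContinuousFunction X ℝ), ∫ z, f z ∂(ν N) =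
      ((N : ℝ) + 1)⁻¹ * ∑ t ∈ Finset.range (N + 1), f (Ψ^[t] x) := by
    intro N f
    simp only [ν]
    rw [integral_smul_measure, integral_finsetSum_measure]
    · have : (((N + 1 : ℕ) : ENNReal)⁻¹).toReal = ((N : ℝ) + 1)⁻¹ := by
        rw [ENNReal.toReal_inv, ENNReal.toReal_natCast]; push_cast; rfl
      rw [this, smul_eq_mul]
      congr 1
      refine Finset.sum_congr rfl fun t _ => ?_
      exact integral_dirac' _ _ f.continuous.stronglyMeasurable
    · intro t _
      exact f.integrable _
  let m : ℕ → ProbabilityMeasure X := fun N => ⟨ν N, hν N⟩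
  obtain ⟨μ, -, hμ⟩ := (isCompact_univ (X := ProbabilityMeasure X)).ultrafilter_le_nhds
    ((hyperfilter ℕ).map m) (by simp)
  have hlim : Tendsto m (hyperfilter ℕ : Filter ℕ) (nhds μ) := hμ
  have hat : (hyperfilter ℕ : Filter ℕ) ≤ atTop := by
    rw [← Nat.cofinite_eq_atTop]; exact hyperfilter_le_cofinite
  rw [ProbabilityMeasure.tendsto_iff_forall_integral_tendsto] at hlim
  refine ⟨μ, inferInstance, ?_, ?_⟩
  · have key : Measure.map Ψ (μ : Measure X) = μ := by
      have : IsProbabilityMeasure (Measure.map Ψ (μ : Measure X)) :=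
        Measure.isProbabilityMeasure_map hΨ.measurable.aemeasurable
      refine ext_of_forall_integral_eq_of_IsFiniteMeasure fun f => ?_
      rw [integral_map hΨ.measurable.aemeasurable f.continuous.aestronglyMeasurable]
      have h1 := hlim f
      have h2 := hlim (f.compContinuous ⟨Ψ, hΨ⟩)
      have h3 := h2.sub h1
      have h4 : Tendsto (fun N => ∫ z, (f.compContinuous ⟨Ψ, hΨ⟩) z ∂(m N : Measure X)
          - ∫ z, f z ∂(m N : Measure X)) (hyperfilter ℕ : Filter ℕ) (nhds 0) := by
        refine Tendsto.mono_left ?_ hat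
        have e : ∀ N : ℕ, ∫ z, (f.compContinuous ⟨Ψ, hΨ⟩) z ∂(m N : Measure X)
          - ∫ z, f z ∂(m N : Measure X) = ((N : ℝ) + 1)⁻¹ * (f (Ψ^[N + 1] x) - f x) := by
          intro N
          change ∫ z, (f.compContinuous ⟨Ψ, hΨ⟩) z ∂(ν N) - ∫ z, f z ∂(ν N) = _
          rw [hInt, hInt, ← mul_sub, ← Finset.sum_sub_distrib]
          have := Finset.sum_range_sub (fun t => f (Ψ^[t] x)) (N + 1)
          simp only [Function.iterate_zero, id] at this
          rw [← this]
          congr 1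
          refine Finset.sum_congr rfl fun t _ => ?_
          rw [Function.iterate_succ_apply']; rfl
        simp only [e]
        have hb : Tendsto (fun N : ℕ => ((N : ℝ) + 1)⁻¹ * (2 * ‖f‖)) atTop (nhds 0) := by
          have := (tendsto_one_div_add_atTop_nhds_zero_nat (𝕜 := ℝ)).mul_const (2 * ‖f‖)
          simpa using this
        refine squeeze_zero_norm (fun N => ?_) hb
        rw [norm_mul]
        have hp : (0 : ℝ) ≤ ((N : ℝ) + 1)⁻¹ := by positivity
        rw [Real.norm_of_nonneg hp]
        refine mul_le_mul_of_nonneg_left ?_ hp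
        calc _ ≤ ‖f (Ψ^[N + 1] x)‖ + ‖f x‖ := norm_sub_le _ _
          _ ≤ ‖f‖ + ‖f‖ := add_le_add (f.norm_coe_le_norm _) (f.norm_coe_le_norm _)
          _ = _ := by ring
      have h5 := tendsto_nhds_unique h3 h4
      have h6 : ∫ z, (f.compContinuous ⟨Ψ, hΨ⟩) z ∂(μ : Measure X) = ∫ z, f z ∂(μ : Measure X) := by
        linarith
      exact h6
    intro A hA
    conv_rhs => rw [← key]
    rw [Measure.map_apply hΨ.measurable hA]
  · intro h0
    let f : BoundedContinuousFunction X ℝ :=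
      BoundedContinuousFunction.mkOfCompact ⟨C.indicator fun _ => (1 : ℝ), continuous_const.indicator (by simp [hC.frontier_eq])⟩
    have hf : ∀ z, f z = C.indicator (fun _ => (1 : ℝ)) z := fun _ => rfl
    have h1 := hlim f
    have h2 : ∀ N, ∫ z, f z ∂(m N : Measure X) = 1 := by
      intro N
      change ∫ z, f z ∂(ν N) = 1
      rw [hInt]
      have : ∀ t, f (Ψ^[t] x) = 1 := fun t => by rw [hf, Set.indicator_of_mem (hx t)]
      simp only [this, Finset.sum_const, Finset.card_range, nsmul_eq_mul, mul_one]
      push_cast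
      exact inv_mul_cancel₀ (by positivity)
    simp only [h2] at h1
    have h3 := tendsto_nhds_unique h1 tendsto_const_nhds
    have h4 : ∫ z, f z ∂(μ : Measure X) = 0 := by
      simp only [hf]
      rw [integral_indicator hC.1.measurableSet, Measure.restrict_eq_zero.2 h0, integral_zero_measure]
    rw [h4] at h3
    exact zero_ne_one h3

/-! ### Locality -/

theorem readS_congr {x y : Conf} {i : ℤ} (h1 : x (i - 1) = y (i - 1)) (h2 : x (i + 1) = y (i + 1)) (q) :
    readS x i q = readS y i q := by
  unfold readS
  rw [h1, h2]

theorem send_congr {x y : Conf} {i : ℤ} (h : ∀ j, i - 1 ≤ j → j ≤ i + 1 → x j = y j) (d) :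
    send x i d = send y i d := by
  unfold send
  rw [h i (by omega) (by omega)]
  cases y i with
  | none => rfl
  | some q => simp only [readS_congr (h (i - 1) (by omega) (by omega)) (h (i + 1) (by omega) (by omega))]

theorem Phi_congr {x y : Conf} {i : ℤ} (h : ∀ j ∈ Finset.Icc (i - 2) (i + 2), x j = y j) :
    Phi x i = Phi y i := by
  have h' : ∀ j, i - 2 ≤ j → j ≤ i + 2 → x j = y j := fun j a b => h j (Finset.mem_Icc.2 ⟨a, b⟩)
  unfold Phi
  rw [send_congr (x := x) (y := y) (i := i) (fun j a b => h' j (by omega) (by omega)),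
    send_congr (x := x) (y := y) (i := i - 1) (fun j a b => h' j (by omega) (by omega)),
    send_congr (x := x) (y := y) (i := i + 1) (fun j a b => h' j (by omega) (by omega))]

theorem readS_shift (x : Conf) (i : ℤ) (q) : readS (fun j => x (j + 1)) i q = readS x (i + 1) q := by
  unfold readS
  have e : i - 1 + 1 = i + 1 - 1 := by ring
  simp only [e]

theorem send_shift (x : Conf) (i : ℤ) (d) : send (fun j => x (j + 1)) i d = send x (i + 1) d := by
  unfold send
  simp only [readS_shift]

theorem Phi_shift (x : Conf) : Phi (fun j => x (j + 1)) = fun i => Phi x (i + 1) := by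
  funext i
  unfold Phi
  rw [send_shift, send_shift, send_shift]
  have e : i - 1 + 1 = i + 1 - 1 := by ring
  rw [e]

theorem Phi_blank : Phi (fun _ => none) = fun _ => none := by
  funext i
  simp [Phi, send, merge]

/-! ### Transfer to the alphabet `Fin (m + 1)` -/

section transfer
variable {m : ℕ} (e : Option State ≃ Fin (m + 1))

noncomputable def Psi (x : ℤ → Fin (m + 1)) : ℤ → Fin (m + 1) :=
  fun i => e (Phi (fun j => e.symm (x j)) i)

theorem Psi_iter (n : ℕ) (x : ℤ → Fin (m + 1)) (i : ℤ) :
    ((Psi e)^[n] x) i = e ((Phi^[n] (fun j => e.symm (x j))) i) := by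
  induction n generalizing i with
  | zero => simp
  | succ n ih =>
    rw [Function.iterate_succ_apply', Function.iterate_succ_apply', Psi]
    congr 2
    funext j
    rw [ih, Equiv.symm_apply_apply]

theorem Psi_continuous : Continuous (Psi e) := by
  refine continuous_pi fun i => ?_
  refine IsLocallyConstant.continuous ((IsLocallyConstant.iff_eventually_eq _).2 fun x => ?_)
  have h : ∀ᶠ y in nhds x, ∀ j ∈ Finset.Icc (i - 2) (i + 2), y j = x j := by
    rw [Filter.eventually_all_finset]
    intro j _
    exact (continuous_apply j).continuousAt.eventually ((isOpen_discrete {x j}).mem_nhds rfl)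
  filter_upwards [h] with y hy
  unfold Psi
  rw [Phi_congr (fun j hj => by rw [hy j hj])]

theorem Psi_alive : ∃ x, ∀ t, (Psi e)^[t] x ∈ {z : ℤ → Fin (m + 1) | z 0 ≠ e none} := by
  have hcl : ∀ N : ℕ, IsClosed {x | ∀ t < N, ((Psi e)^[t] x) 0 ≠ e none} := by
    intro N
    simp only [Set.ofPred_forall]
    refine isClosed_iInter fun t => isClosed_iInter fun _ => ?_
    have hc : Continuous fun x => ((Psi e)^[t] x) 0 :=
      (continuous_apply 0).comp ((Psi_continuous e).iterate t)
    exact (isClosed_discrete {z : Fin (m + 1) | z ≠ e none}).preimage hc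
  have := IsCompact.nonempty_iInter_of_sequence_nonempty_isCompact_isClosed
    (fun N : ℕ => {x | ∀ t < N, ((Psi e)^[t] x) 0 ≠ e none})
    (fun N x hx t ht => hx t (by omega)) ?_ (hcl 0).isCompact hcl
  · obtain ⟨x, hx⟩ := this
    rw [Set.mem_iInter] at hx
    exact ⟨x, fun t => hx (t + 1) t (by omega)⟩
  · intro N
    obtain ⟨x, hx⟩ := exists_alive N
    refine ⟨fun j => e (x j), fun t ht => ?_⟩
    rw [Psi_iter]
    simpa using hx t ht

theorem Psi_blank : Psi e (fun _ => e none) = fun _ => e none := by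
  funext i
  simp [Psi, Phi_blank]

theorem Psi_not_unique : ¬ (∃! μ : Measure (ℤ → Fin (m + 1)), IsProbabilityMeasure μ ∧
    ∀ A : Set (ℤ → Fin (m + 1)), MeasurableSet A → μ (Psi e ⁻¹' A) = μ A) := by
  rintro ⟨μ, -, hu⟩
  have hCc : IsClopen {z : ℤ → Fin (m + 1) | z 0 ≠ e none} :=
    (isClopen_discrete {a : Fin (m + 1) | a ≠ e none}).preimage (continuous_apply 0)
  obtain ⟨x, hx⟩ := Psi_alive e
  obtain ⟨μ1, hp, hi, hne⟩ := krylov (Psi e) (Psi_continuous e) _ hCc x hx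
  have h1 := hu μ1 ⟨hp, hi⟩
  have h2 := hu (Measure.dirac fun _ => e none) ⟨inferInstance, fun A hA => by
    rw [Measure.dirac_apply' _ hA, Measure.dirac_apply' _ ((Psi_continuous e).measurable hA)]
    have : ((fun _ => e none) ∈ Psi e ⁻¹' A) = ((fun _ => e none) ∈ A) := by
      rw [Set.mem_preimage, Psi_blank]
    by_cases hb : (fun _ => e none) ∈ A
    · rw [Set.indicator_of_mem hb, Set.indicator_of_mem (this.mpr hb)]
    · rw [Set.indicator_of_notMem hb, Set.indicator_of_notMem (fun h => hb (this.mp h))]⟩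
  apply hne
  rw [h1, ← h2, Measure.dirac_apply' _ hCc.1.measurableSet]
  simp

theorem Psi_and (ε : ℝ) (hε : 0 < ε) : ∃ n : ℕ, ∀ x : ℤ → Fin (m + 1),
    besicovitchDist ((Psi e)^[n] x) (fun _ => e none) < ε := by
  obtain ⟨K, hK⟩ := exists_pow_lt_of_lt_one (show (0 : ℝ) < ε / 8 by positivity) (show (1 / 2 : ℝ) < 1 by norm_num)
  obtain ⟨c, k, hc, hd⟩ := density K
  refine ⟨k, fun x => ?_⟩
  have hev : ∀ᶠ n : ℕ in atTop, (((Finset.Icc (-(n : ℤ)) (n : ℤ)).filter fun i =>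
      ((Psi e)^[k] x) i ≠ e none).card : ℝ) / (2 * (n : ℝ) + 1) ≤ ε / 2 := by
    obtain ⟨N0, hN0⟩ := exists_nat_gt ((ε / 4 * c + 2 ^ K * 2) / (ε / 2))
    filter_upwards [eventually_ge_atTop N0] with n hn
    have h := hd (fun j => e.symm (x j)) n ((Finset.Icc (-(n : ℤ)) (n : ℤ)).filter fun i =>
      ((Psi e)^[k] x) i ≠ e none) (by
        intro p hp
        rw [Finset.mem_filter, Finset.mem_Icc, Psi_iter] at hp
        refine ⟨hp.1.1, hp.1.2, fun h0 => hp.2 (by rw [h0])⟩)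
    rw [div_le_iff₀ (by positivity)]
    have hdiv : (((2 * (n : ℤ) + c) / 4 ^ K : ℤ) : ℝ) ≤ (2 * n + c) / 4 ^ K := by
      rw [le_div_iff₀ (by positivity)]
      exact_mod_cast Int.ediv_mul_le _ (by positivity)
    have h' : (((Finset.Icc (-(n : ℤ)) (n : ℤ)).filter fun i =>
      ((Psi e)^[k] x) i ≠ e none).card : ℝ) ≤ 2 ^ K * (2 * ((((2 * (n : ℤ) + c) / 4 ^ K : ℤ) : ℝ) + 1)) := by
      exact_mod_cast h
    refine h'.trans ?_
    have h2 : (2 : ℝ) ^ K * (2 * ((2 * n + c) / 4 ^ K + 1)) = 2 * (1 / 2) ^ K * (2 * n + c) + 2 ^ K * 2 := by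
      have : (4 : ℝ) ^ K = 2 ^ K * 2 ^ K := by rw [← mul_pow]; norm_num
      rw [this, one_div, inv_pow]
      field_simp
    have h3 : (2 : ℝ) ^ K * (2 * ((((2 * (n : ℤ) + c) / 4 ^ K : ℤ) : ℝ) + 1)) ≤
        2 ^ K * (2 * ((2 * n + c) / 4 ^ K + 1)) := by gcongr
    refine h3.trans ?_
    rw [h2]
    have hc' : (0 : ℝ) ≤ c := by exact_mod_cast hc
    have h4 : 2 * (1 / 2 : ℝ) ^ K * (2 * n + c) ≤ ε / 4 * (2 * n + c) := by
      refine mul_le_mul_of_nonneg_right (by linarith) (by positivity)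
    have h5 : ε / 4 * c + 2 ^ K * 2 ≤ ε / 2 * n := by
      have : (N0 : ℝ) ≤ n := by exact_mod_cast hn
      rw [div_lt_iff₀ (by positivity)] at hN0
      nlinarith
    nlinarith
  have hle : besicovitchDist ((Psi e)^[k] x) (fun _ => e none) ≤ ε / 2 := by
    unfold besicovitchDist
    refine limsup_le_of_le ?_ hev
    exact IsBoundedUnder.isCoboundedUnder_le ⟨0, by
      rw [eventually_map]
      exact Eventually.of_forall fun n => by positivity⟩
  linarith

end transfer

theorem exists_equiv : ∃ m : ℕ, Nonempty (Option State ≃ Fin (m + 1)) := by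
  obtain ⟨n, ⟨f⟩⟩ := Finite.exists_equiv_fin (Option State)
  cases n with
  | zero => exact (f none).elim0
  | succ m => exact ⟨m, ⟨f⟩⟩

end ANDCA

/-- There exists a cellular automaton with a quiescent state which is
asymptotically nilpotent in density but not uniquely ergodic. -/
theorem exists_AND_not_uniquelyErgodic_CA :
    ∃ (m : ℕ) (B : Fin (m + 1)) (Φ : (ℤ → Fin (m + 1)) → (ℤ → Fin (m + 1))),
      Continuous Φ ∧
      (∀ x : ℤ → Fin (m + 1), Φ (fun i => x (i + 1)) = fun i => Φ x (i + 1)) ∧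
      Φ (fun _ => B) = (fun _ => B) ∧
      (∀ ε : ℝ, 0 < ε → ∃ n : ℕ, ∀ x : ℤ → Fin (m + 1),
          besicovitchDist (Φ^[n] x) (fun _ => B) < ε) ∧
      ¬ (∃! μ : Measure (ℤ → Fin (m + 1)), IsProbabilityMeasure μ ∧
          ∀ A : Set (ℤ → Fin (m + 1)), MeasurableSet A → μ (Φ ⁻¹' A) = μ A) := by
  obtain ⟨m, ⟨e⟩⟩ := ANDCA.exists_equiv
  refine ⟨m, e none, ANDCA.Psi e, ANDCA.Psi_continuous e, ?_, ANDCA.Psi_blank e,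
    ANDCA.Psi_and e, ANDCA.Psi_not_unique e⟩
  intro x
  funext i
  exact congrArg e (congrFun (ANDCA.Phi_shift fun j => e.symm (x j)) i)
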